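/- arXiv:0910.2960 — 2 statements merged into one kernel-verified Lean document; each statement's English description precedes it below -/
import Mathlib

section
/- For y ≥ 2, let n(y) be the largest integer n such that 𝒫_n ≤ y, where 𝒫_n is the n-th primorial. Then p_{n(y)} ∼ log y as y → ∞; i.e., the largest prime factor of the largest primorial not exceeding y is asymptotic to log y. -/
open Filter Real

/-- The `n`-th prime, 1-indexed: `nthPrime 1 = 2`, `nthPrime 2 = 3`, ... -/
noncomputable def nthPrime (n : ℕ) : ℕ := Nat.nth Nat.Prime (n - 1)

/-- `N x d` is the number of indices `n ≥ 2` with `pₙ ≤ x` and `pₙ - pₙ₋₁ = d`. -/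
noncomputable def N (x : ℝ) (d : ℕ) : ℕ :=
  Set.ncard {n : ℕ | 2 ≤ n ∧ (nthPrime n : ℝ) ≤ x ∧ nthPrime n - nthPrime (n - 1) = d}

/-- `N* x`, the maximal number of occurrences of any gap among consecutive primes up to `x`. -/
noncomputable def Nstar (x : ℝ) : ℕ := sSup (Set.range fun d => N x d)

/-- A positive integer `d` is a jumping champion for `x` if `N x d` attains `max_d N x d`. -/
def JumpingChampion (x : ℝ) (d : ℕ) : Prop := 0 < d ∧ ∀ e : ℕ, N x e ≤ N x d

/-- `pi2 x d` counts primes `q ≤ x` such that `q - d` is also prime. -/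
noncomputable def pi2 (x : ℝ) (d : ℕ) : ℕ :=
  Set.ncard {q : ℕ | q.Prime ∧ (q : ℝ) ≤ x ∧ (q - d).Prime}

/-- `pi3 x d d'` counts primes `q ≤ x` such that `q - d` and `q - d'` are both prime. -/
noncomputable def pi3 (x : ℝ) (d d' : ℕ) : ℕ :=
  Set.ncard {q : ℕ | q.Prime ∧ (q : ℝ) ≤ x ∧ (q - d).Prime ∧ (q - d').Prime}

/-- The twin prime constant `C₂ = ∏_{p > 2} (1 - 1/(p-1)²)`. -/
noncomputable def C2 : ℝ := ∏' q : {q : ℕ // q.Prime ∧ 2 < q}, (1 - 1 / ((q : ℕ) - 1 : ℝ) ^ 2)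

/-- The singular series `𝔖(d)`. -/
noncomputable def singularSeries (d : ℕ) : ℝ :=
  if Even d then
    2 * C2 * ∏ q ∈ d.primeFactors.filter (fun q => 2 < q), ((q : ℝ) - 1) / ((q : ℝ) - 2)
  else 0

/-- `nu d' d q` is the number of distinct residue classes mod `q` occupied by `{0, d', d}`. -/
def nu (d' d : ℕ) (q : ℕ) : ℕ :=
  ({(0 : ZMod q), (d' : ZMod q), (d : ZMod q)} : Finset (ZMod q)).card

/-- The singular series of the triple `{0, d', d}`. -/
noncomputable def tripleSingularSeries (d' d : ℕ) : ℝ :=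
  ∏' q : Nat.Primes, ((1 - 1 / ((q : ℕ) : ℝ)) ^ 3)⁻¹ * (1 - (nu d' d q : ℝ) / ((q : ℕ) : ℝ))

/-- The `k`-th primorial, the product of the first `k` primes. -/
noncomputable def primorialN (k : ℕ) : ℕ := ∏ i ∈ Finset.range k, Nat.nth Nat.Prime i

/-- The index `n` of the largest primorial `𝒫ₙ ≤ y`. -/
noncomputable def primorialFloorIndex (y : ℝ) : ℕ := sSup {n : ℕ | (primorialN n : ℝ) ≤ y}

/-- Chebyshev's theta function `ϑ(t) = ∑_{p ≤ t} log p`. -/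
noncomputable def theta (t : ℝ) : ℝ :=
  ∑ q ∈ (Finset.range (⌊t⌋₊ + 1)).filter Nat.Prime, Real.log q

open MeasureTheory Topology

/-- `ψ(e^u) e^{-u}`. -/
noncomputable def pntB (u : ℝ) : ℝ := Chebyshev.psi (Real.exp u) * Real.exp (-u)

lemma pntB_nonneg (u : ℝ) : 0 ≤ pntB u :=
  mul_nonneg (Chebyshev.psi_nonneg _) (Real.exp_pos _).le

lemma pntB_le (u : ℝ) : pntB u ≤ Real.log 4 + 4 := by
  have h := Chebyshev.psi_le_const_mul_self (Real.exp_pos u).le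
  unfold pntB
  calc _ ≤ (Real.log 4 + 4) * Real.exp u * Real.exp (-u) := by gcongr
    _ = _ := by rw [mul_assoc, ← Real.exp_add]; simp

lemma pntB_of_nonpos {u : ℝ} (hu : u ≤ 0) : pntB u = 0 := by
  unfold pntB
  rw [Chebyshev.psi_eq_zero_of_le_one (by simpa using hu), zero_mul]

lemma pntB_measurable : Measurable pntB :=
  (Chebyshev.psi_mono.measurable.comp Real.measurable_exp).mul
    (Real.measurable_exp.comp measurable_neg)

lemma pntB_mono {u v : ℝ} (h : u ≤ v) : pntB u * Real.exp (u - v) ≤ pntB v := by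
  unfold pntB
  rw [mul_assoc, ← Real.exp_add]
  have : -u + (u - v) = -v := by ring
  rw [this]
  exact mul_le_mul_of_nonneg_right (Chebyshev.psi_mono (Real.exp_le_exp.2 h)) (Real.exp_pos _).le

lemma pnt_LSeries {s : ℂ} (hs : 1 < s.re) :
    LSeries (fun n => (ArithmeticFunction.vonMangoldt n : ℂ)) s =
      s * ∫ u in Set.Ioi (0 : ℝ), (pntB u : ℂ) * Complex.exp (-(s - 1) * u) := by
  have hpsi : ∀ x : ℝ, ∑ k ∈ Finset.Icc 1 ⌊x⌋₊, ArithmeticFunction.vonMangoldt k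
      = Chebyshev.psi x := fun x => rfl
  rw [LSeries_eq_mul_integral_of_nonneg (fun n => ArithmeticFunction.vonMangoldt n)
    zero_le_one hs _ (fun n => ArithmeticFunction.vonMangoldt_nonneg)]
  · congr 1
    have h1 : Set.Ioi (1 : ℝ) = Real.exp '' Set.Ioi 0 := by rw [Real.image_exp_Ioi, Real.exp_zero]
    rw [h1, integral_image_eq_integral_abs_deriv_smul measurableSet_Ioi
      (fun x _ => (Real.hasDerivAt_exp x).hasDerivWithinAt) Real.exp_injective.injOn]
    refine setIntegral_congr_fun measurableSet_Ioi fun u hu => ?_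
    have := hpsi (Real.exp u)
    have h2 : ∑ k ∈ Finset.Icc 1 ⌊Real.exp u⌋₊, ((ArithmeticFunction.vonMangoldt k : ℝ) : ℂ)
      = ((Chebyshev.psi (Real.exp u) : ℝ) : ℂ) := by rw [← this]; push_cast; rfl
    rw [h2, pntB, abs_of_pos (Real.exp_pos _), Complex.real_smul]
    rw [Complex.cpow_def_of_ne_zero (by exact_mod_cast (Real.exp_pos u).ne'),
      ← Complex.ofReal_log (Real.exp_pos u).le, Real.log_exp]
    push_cast
    rw [mul_left_comm, mul_assoc, ← Complex.exp_add, ← Complex.exp_add]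
    congr 2
    ring
  · refine Asymptotics.IsBigO.of_bound (Real.log 4 + 4) (Eventually.of_forall fun n => ?_)
    have := hpsi n
    rw [Nat.floor_natCast] at this
    rw [this, Real.norm_of_nonneg (Chebyshev.psi_nonneg _), Real.rpow_one, Real.norm_natCast]
    exact Chebyshev.psi_le_const_mul_self (Nat.cast_nonneg n)

lemma pnt_integrable {a : ℂ} (ha : a.re < 0) :
    IntegrableOn (fun u : ℝ => ((pntB u : ℂ) - 1) * Complex.exp (a * u)) (Set.Ioi 0) := by
  refine Integrable.bdd_mul (c := Real.log 4 + 5) (integrableOn_exp_mul_complex_Ioi ha 0)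
    ((Complex.measurable_ofReal.comp pntB_measurable).sub_const 1).aestronglyMeasurable
    (Eventually.of_forall fun u => ?_)
  have : ‖(pntB u : ℂ)‖ ≤ Real.log 4 + 4 := by
    rw [Complex.norm_real, Real.norm_of_nonneg (pntB_nonneg u)]; exact pntB_le u
  calc _ ≤ ‖(pntB u : ℂ)‖ + ‖(1 : ℂ)‖ := norm_sub_le _ _
    _ ≤ _ := by rw [norm_one]; linarith

lemma pnt_continuation : ∃ H : ℂ → ℂ, ContinuousOn H {s | 1 ≤ s.re} ∧ ∀ s : ℂ, 1 < s.re →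
    ∫ u in Set.Ioi (0 : ℝ), ((pntB u : ℂ) - 1) * Complex.exp (-(s - 1) * u) = H s := by
  refine ⟨fun s => (ArithmeticFunction.vonMangoldt.LFunctionResidueClassAux (1 : ZMod 1) s - 1) / s,
    ?_, ?_⟩
  · refine ((ArithmeticFunction.vonMangoldt.continuousOn_LFunctionResidueClassAux
      (1 : ZMod 1)).sub continuousOn_const).div continuousOn_id ?_
    intro s hs h
    change s = 0 at h
    simp only [Set.mem_ofPred_eq, h, Complex.zero_re] at hs
    norm_num at hs
  · intro s hs
    have hs0 : s ≠ 0 := by rintro rfl; norm_num at hs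
    have hs1 : s - 1 ≠ 0 := by
      intro h
      rw [sub_eq_zero.1 h] at hs; norm_num at hs
    have ha : (-(s - 1)).re < 0 := by simp; linarith
    have h1 := ArithmeticFunction.vonMangoldt.eqOn_LFunctionResidueClassAux
      (q := 1) (a := 1) isUnit_one hs
    have h2 : (fun n => (ArithmeticFunction.vonMangoldt.residueClass (1 : ZMod 1) n : ℂ)) =
        fun n => (ArithmeticFunction.vonMangoldt n : ℂ) := by
      funext n
      simp [ArithmeticFunction.vonMangoldt.residueClass, Set.indicator, Subsingleton.elim _ (1 : ZMod 1)]
    have h3 : ∫ u in Set.Ioi (0 : ℝ), ((pntB u : ℂ) - 1) * Complex.exp (-(s - 1) * u) =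
        (∫ u in Set.Ioi (0 : ℝ), (pntB u : ℂ) * Complex.exp (-(s - 1) * u)) - 1 / (s - 1) := by
      have e : ∫ u in Set.Ioi (0 : ℝ), Complex.exp (-(s - 1) * u) = 1 / (s - 1) := by
        rw [integral_exp_mul_complex_Ioi ha]
        simp only [Complex.ofReal_zero, mul_zero, Complex.exp_zero]
        rw [neg_div_neg_eq]
      rw [← e, ← integral_sub]
      · congr 1; funext u; ring
      · have := (pnt_integrable ha).add (integrableOn_exp_mul_complex_Ioi ha 0)
        refine this.congr (Eventually.of_forall fun u => ?_)
        simp only [Pi.add_apply]; ring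
      · exact integrableOn_exp_mul_complex_Ioi ha 0
    rw [h3]
    beta_reduce at h1 ⊢
    rw [h1, h2, pnt_LSeries hs]
    simp only [Nat.totient_one, Nat.cast_one, inv_one]
    field_simp
    ring
/-- The Fejer kernel at scale `T`. -/
noncomputable def pntK (T x : ℝ) : ℝ := T * Real.sinc (Real.pi * T * x) ^ 2

/-- The triangle function of half-width `T`. -/
noncomputable def pntg (T ξ : ℝ) : ℝ := max 0 (1 - |ξ| / T)

lemma pntg_continuous (T : ℝ) : Continuous (pntg T) := by
  unfold pntg; fun_prop

lemma pntg_nonneg (T ξ : ℝ) : 0 ≤ pntg T ξ := le_max_left _ _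

lemma pntg_eq_zero {T ξ : ℝ} (hT : 0 < T) (h : ξ ∉ Set.Ioc (-T) T) : pntg T ξ = 0 := by
  unfold pntg
  refine max_eq_left ?_
  rw [sub_nonpos, le_div_iff₀ hT, one_mul]
  by_contra hc
  push Not at hc
  exact h ⟨(abs_lt.1 hc).1, (abs_lt.1 hc).2.le⟩

lemma pntg_support {T : ℝ} (hT : 0 < T) : HasCompactSupport (pntg T) := by
  refine HasCompactSupport.intro (K := Set.Icc (-T) T) isCompact_Icc fun x hx => ?_
  exact pntg_eq_zero hT fun h => hx (Set.Ioc_subset_Icc_self h)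

lemma pntg_integrable {T : ℝ} (hT : 0 < T) : Integrable (pntg T) :=
  (pntg_continuous T).integrable_of_hasCompactSupport (pntg_support hT)

lemma pntg_right {T ξ : ℝ} (hT : 0 < T) (h : ξ ∈ Set.Icc 0 T) : pntg T ξ = 1 - ξ / T := by
  unfold pntg
  rw [abs_of_nonneg h.1, max_eq_right]
  rw [sub_nonneg, div_le_one hT]; exact h.2

lemma pntg_left {T ξ : ℝ} (hT : 0 < T) (h : ξ ∈ Set.Icc (-T) 0) : pntg T ξ = 1 + ξ / T := by
  unfold pntg
  rw [abs_of_nonpos h.2, max_eq_right]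
  · ring
  rw [sub_nonneg, div_le_one hT]; linarith [h.1]

lemma pntg_exp_integral {T : ℝ} (hT : 0 < T) {a : ℂ} (ha : a ≠ 0) :
    ∫ ξ : ℝ, Complex.exp (a * ξ) * (pntg T ξ : ℂ) =
      (Complex.exp (a * T) + Complex.exp (-(a * T)) - 2) / (T * a ^ 2) := by
  have hTc : (T : ℂ) ≠ 0 := by exact_mod_cast hT.ne'
  have hcont : Continuous fun ξ : ℝ => Complex.exp (a * ξ) * (pntg T ξ : ℂ) := by
    have := pntg_continuous T
    fun_prop
  rw [← setIntegral_eq_integral_of_forall_compl_eq_zero (s := Set.Ioc (-T) T)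
    (fun ξ hξ => by rw [pntg_eq_zero hT hξ]; simp),
    ← intervalIntegral.integral_of_le (by linarith),
    ← intervalIntegral.integral_add_adjacent_intervals (b := 0)
      (hcont.intervalIntegrable _ _) (hcont.intervalIntegrable _ _)]
  have hexp : ∀ x : ℝ, HasDerivAt (fun x : ℝ => Complex.exp (a * x)) (Complex.exp (a * x) * a) x := by
    intro x
    have h : HasDerivAt (fun x : ℝ => a * (x : ℂ)) (a * 1) x :=
      (Complex.ofRealCLM.hasDerivAt (x := x)).const_mul a
    simpa using h.cexp
  have hid : ∀ x : ℝ, HasDerivAt (fun x : ℝ => (x : ℂ)) 1 x :=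
    fun x => Complex.ofRealCLM.hasDerivAt (x := x)
  have h1 : ∫ ξ in (-T)..0, Complex.exp (a * ξ) * (pntg T ξ : ℂ) =
      1 / a - 1 / (T * a ^ 2) + Complex.exp (-(a * T)) / (T * a ^ 2) := by
    have e : ∫ ξ in (-T)..0, Complex.exp (a * ξ) * (pntg T ξ : ℂ) =
        ∫ ξ in (-T)..0, Complex.exp (a * ξ) * (1 + (ξ : ℂ) / T) := by
      refine intervalIntegral.integral_congr fun ξ hξ => ?_
      rw [Set.uIcc_of_le (by linarith)] at hξ
      rw [pntg_left hT hξ]; push_cast; rfl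
    rw [e, intervalIntegral.integral_eq_sub_of_hasDerivAt
      (f := fun x : ℝ => Complex.exp (a * x) * ((1 + (x : ℂ) / T) / a - 1 / (T * a ^ 2)))]
    · push_cast
      simp only [mul_zero, Complex.exp_zero, zero_div, mul_neg]
      field_simp
      ring
    · intro x _
      have := (hexp x).mul ((((hid x).div_const (T : ℂ)).const_add 1 |>.div_const a).sub_const
        (1 / (T * a ^ 2)))
      refine HasDerivAt.congr_deriv this ?_
      field_simp
      ring
    · refine Continuous.intervalIntegrable ?_ _ _
      fun_prop
  have h2 : ∫ ξ in (0)..T, Complex.exp (a * ξ) * (pntg T ξ : ℂ) =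
      -(1 / a) - 1 / (T * a ^ 2) + Complex.exp (a * T) / (T * a ^ 2) := by
    have e : ∫ ξ in (0)..T, Complex.exp (a * ξ) * (pntg T ξ : ℂ) =
        ∫ ξ in (0)..T, Complex.exp (a * ξ) * (1 - (ξ : ℂ) / T) := by
      refine intervalIntegral.integral_congr fun ξ hξ => ?_
      rw [Set.uIcc_of_le (by linarith)] at hξ
      rw [pntg_right hT hξ]; push_cast; rfl
    rw [e, intervalIntegral.integral_eq_sub_of_hasDerivAt
      (f := fun x : ℝ => Complex.exp (a * x) * ((1 - (x : ℂ) / T) / a + 1 / (T * a ^ 2)))]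
    · push_cast
      simp only [mul_zero, Complex.exp_zero, zero_div]
      field_simp
      ring
    · intro x _
      have := (hexp x).mul ((((hid x).div_const (T : ℂ)).const_sub 1 |>.div_const a).add_const
        (1 / (T * a ^ 2)))
      refine HasDerivAt.congr_deriv this ?_
      field_simp
      ring
    · refine Continuous.intervalIntegrable ?_ _ _
      fun_prop
  rw [h1, h2]
  field_simp
  ring

open FourierTransform in
lemma pntg_fourier_of_ne {T : ℝ} (hT : 0 < T) {x : ℝ} (hx : x ≠ 0) :
    𝓕 (fun ξ : ℝ => (pntg T ξ : ℂ)) x = (pntK T x : ℂ) := by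
  rw [Real.fourier_real_eq_integral_exp_smul]
  have ha : (-2 * Real.pi * x * Complex.I : ℂ) ≠ 0 := by
    have : (Real.pi : ℂ) ≠ 0 := by exact_mod_cast Real.pi_ne_zero
    have h2 : (x : ℂ) ≠ 0 := by exact_mod_cast hx
    simp [this, h2]
  have hpi : (Real.pi : ℂ) ≠ 0 := by exact_mod_cast Real.pi_ne_zero
  have hxc : (x : ℂ) ≠ 0 := by exact_mod_cast hx
  have hTc : (T : ℂ) ≠ 0 := by exact_mod_cast hT.ne'
  have := pntg_exp_integral hT ha
  calc _ = ∫ ξ : ℝ, Complex.exp ((-2 * Real.pi * x * Complex.I : ℂ) * ξ) * (pntg T ξ : ℂ) := by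
        refine integral_congr_ae (Eventually.of_forall fun ξ => ?_)
        simp only [smul_eq_mul]
        congr 2
        push_cast; ring
    _ = _ := by
        rw [this, pntK, Real.sinc_of_ne_zero (by positivity)]
        have h1 : Complex.exp ((-2 * Real.pi * x * Complex.I : ℂ) * T) +
            Complex.exp (-((-2 * Real.pi * x * Complex.I : ℂ) * T)) =
            2 * Complex.cos (2 * (Real.pi * T * x)) := by
          rw [Complex.cos, add_comm, mul_div_cancel₀ _ two_ne_zero]
          congr 2 <;> ring
        rw [h1, Complex.cos_two_mul]
        push_cast
        have h2 := Complex.sin_sq_add_cos_sq (Real.pi * T * x : ℂ)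
        have h3 : Complex.cos (Real.pi * T * x : ℂ) ^ 2 = 1 - Complex.sin (Real.pi * T * x : ℂ) ^ 2 := by
          linear_combination h2
        rw [h3]
        have hI : (-2 * Real.pi * x * Complex.I : ℂ) ^ 2 = -(4 * Real.pi ^ 2 * x ^ 2) := by
          rw [mul_pow, Complex.I_sq]; ring
        rw [hI]
        field_simp
        ring

open FourierTransform in
lemma pntg_fourier {T : ℝ} (hT : 0 < T) (x : ℝ) :
    𝓕 (fun ξ : ℝ => (pntg T ξ : ℂ)) x = (pntK T x : ℂ) := by
  have hc1 : Continuous (𝓕 (fun ξ : ℝ => (pntg T ξ : ℂ))) := by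
    apply VectorFourier.fourierIntegral_continuous Real.continuous_fourierChar
    · exact (innerSL ℝ (E := ℝ)).continuous₂
    · exact (pntg_integrable hT).ofReal
  have hc2 : Continuous fun x : ℝ => (pntK T x : ℂ) := by
    unfold pntK
    have := Real.continuous_sinc
    fun_prop
  have hd : Dense ({0}ᶜ : Set ℝ) := dense_compl_singleton 0
  exact congrFun (Continuous.ext_on hd hc1 hc2 fun y hy => pntg_fourier_of_ne hT hy) x
lemma pntK_continuous (T : ℝ) : Continuous (pntK T) := by
  unfold pntK
  have := Real.continuous_sinc
  fun_prop

lemma pntK_nonneg {T : ℝ} (hT : 0 ≤ T) (x : ℝ) : 0 ≤ pntK T x :=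
  mul_nonneg hT (sq_nonneg _)

lemma pntK_scale (T x : ℝ) : pntK T x = T * pntK 1 (T * x) := by
  simp only [pntK, mul_one, one_mul, mul_assoc]

lemma pntK_one_integrable : Integrable (pntK 1) := by
  refine (integrable_inv_one_add_sq.const_mul 2).mono' (pntK_continuous 1).aestronglyMeasurable
    (Eventually.of_forall fun x => ?_)
  rw [Real.norm_of_nonneg (pntK_nonneg zero_le_one x), ← div_eq_mul_inv,
    le_div_iff₀ (by positivity)]
  simp only [pntK, mul_one, one_mul]
  have h1 : Real.sinc (Real.pi * x) ^ 2 ≤ 1 := by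
    rw [sq_le_one_iff_abs_le_one]; exact Real.abs_sinc_le_one _
  have h2 : Real.sinc (Real.pi * x) ^ 2 * (Real.pi * x) ^ 2 ≤ 1 := by
    rcases eq_or_ne (Real.pi * x) 0 with h | h
    · rw [h]; simp
    · rw [Real.sinc_of_ne_zero h, div_pow, div_mul_cancel₀ _ (pow_ne_zero 2 h)]
      exact Real.sin_sq_le_one _
  have h3 : Real.sinc (Real.pi * x) ^ 2 * x ^ 2 ≤ Real.sinc (Real.pi * x) ^ 2 * (Real.pi * x) ^ 2 := by
    refine mul_le_mul_of_nonneg_left ?_ (sq_nonneg _)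
    rw [mul_pow]
    have : 1 ≤ Real.pi ^ 2 := by nlinarith [Real.pi_gt_three]
    nlinarith [sq_nonneg x]
  linarith

lemma pntK_integrable {T : ℝ} (hT : 0 < T) : Integrable (pntK T) := by
  have := (pntK_one_integrable.comp_mul_left' hT.ne').const_mul T
  refine this.congr (Eventually.of_forall fun x => ?_)
  exact (pntK_scale T x).symm

lemma pntK_one_pos : 0 < ∫ x, pntK 1 x :=
  integral_pos_of_integrable_nonneg_nonzero (x := 0) (pntK_continuous 1) pntK_one_integrable
    (fun x => pntK_nonneg zero_le_one x) (by simp [pntK])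

open FourierTransform in
lemma pnt_identity {H : ℂ → ℂ} (hH : ∀ s : ℂ, 1 < s.re →
    ∫ u in Set.Ioi (0 : ℝ), ((pntB u : ℂ) - 1) * Complex.exp (-(s - 1) * u) = H s)
    {T : ℝ} (hT : 0 < T) {σ : ℝ} (hσ : 0 < σ) (v : ℝ) :
    ∫ ξ : ℝ, H (1 + σ + 2 * Real.pi * ξ * Complex.I) *
        (Complex.exp (2 * Real.pi * v * ξ * Complex.I) * (pntg T ξ : ℂ)) =
      ∫ u in Set.Ioi (0 : ℝ), (((pntB u : ℂ) - 1) * Complex.exp (-σ * u)) * (pntK T (u - v) : ℂ) := by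
  set f : ℝ → ℂ := (Set.Ioi (0 : ℝ)).indicator
    (fun u : ℝ => ((pntB u : ℂ) - 1) * Complex.exp (-σ * u)) with hf
  set g : ℝ → ℂ := fun ξ => Complex.exp (2 * Real.pi * v * ξ * Complex.I) * (pntg T ξ : ℂ) with hg
  have hfi : Integrable f := by
    rw [hf, integrable_indicator_iff measurableSet_Ioi]
    exact pnt_integrable (by simpa using hσ)
  have hgi : Integrable g := by
    refine Integrable.bdd_mul (c := 1) (pntg_integrable hT).ofReal
      (Continuous.aestronglyMeasurable (by fun_prop)) (Eventually.of_forall fun ξ => ?_)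
    have : (2 * Real.pi * v * ξ * Complex.I : ℂ) = ((2 * Real.pi * v * ξ : ℝ) : ℂ) * Complex.I := by
      push_cast; rfl
    rw [this, Complex.norm_exp_ofReal_mul_I]
  have key : ∫ ξ, 𝓕 f ξ * g ξ = ∫ x, f x * 𝓕 g x := by
    simpa using! VectorFourier.integral_bilin_fourierIntegral_eq_flip
      (ContinuousLinearMap.mul ℂ ℂ) (L := innerₗ ℝ)
      Real.continuous_fourierChar continuous_inner hfi hgi
  have hFf : ∀ ξ, 𝓕 f ξ = H (1 + σ + 2 * Real.pi * ξ * Complex.I) := by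
    intro ξ
    rw [← hH _ (by simp [hσ]), Real.fourier_real_eq_integral_exp_smul,
      ← integral_indicator measurableSet_Ioi]
    refine integral_congr_ae (Eventually.of_forall fun u => ?_)
    simp only [hf, Set.indicator_apply, smul_eq_mul]
    split_ifs with hu
    · rw [mul_left_comm, ← Complex.exp_add]
      congr 2
      push_cast; ring
    · simp
  have hFg : ∀ u, 𝓕 g u = (pntK T (u - v) : ℂ) := by
    intro u
    rw [← pntg_fourier hT, Real.fourier_real_eq_integral_exp_smul,
      Real.fourier_real_eq_integral_exp_smul]
    refine integral_congr_ae (Eventually.of_forall fun ξ => ?_)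
    simp only [hg, smul_eq_mul]
    rw [← mul_assoc, ← Complex.exp_add]
    congr 2
    push_cast; ring
  simp only [hFf, hFg] at key
  rw [key, ← integral_indicator measurableSet_Ioi]
  refine integral_congr_ae (Eventually.of_forall fun u => ?_)
  simp only [hf, Set.indicator_apply]
  split_ifs <;> simp

lemma pnt_identity_zero {H : ℂ → ℂ} (hc : ContinuousOn H {s | 1 ≤ s.re}) (hH : ∀ s : ℂ, 1 < s.re →
    ∫ u in Set.Ioi (0 : ℝ), ((pntB u : ℂ) - 1) * Complex.exp (-(s - 1) * u) = H s)
    {T : ℝ} (hT : 0 < T) (v : ℝ) :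
    ∫ ξ : ℝ, H (1 + 2 * Real.pi * ξ * Complex.I) *
        (Complex.exp (2 * Real.pi * v * ξ * Complex.I) * (pntg T ξ : ℂ)) =
      ∫ u in Set.Ioi (0 : ℝ), ((pntB u : ℂ) - 1) * (pntK T (u - v) : ℂ) := by
  -- the compact box
  set S : Set (ℝ × ℝ) := Set.Icc 0 1 ×ˢ Set.Icc (-T) T with hS
  have hScomp : IsCompact S := isCompact_Icc.prod isCompact_Icc
  have hcS : ContinuousOn (fun p : ℝ × ℝ => H (1 + p.1 + 2 * Real.pi * p.2 * Complex.I)) S := by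
    refine hc.comp (Continuous.continuousOn (by fun_prop)) fun p hp => ?_
    simp only [Set.mem_ofPred_eq]
    simp
    exact hp.1.1
  obtain ⟨M, hM⟩ := hScomp.exists_bound_of_continuousOn hcS
  have hnexp : ∀ ξ : ℝ, ‖Complex.exp (2 * Real.pi * v * ξ * Complex.I)‖ = 1 := by
    intro ξ
    have : (2 * Real.pi * v * ξ * Complex.I : ℂ) = ((2 * Real.pi * v * ξ : ℝ) : ℂ) * Complex.I := by
      push_cast; rfl
    rw [this, Complex.norm_exp_ofReal_mul_I]
  have hev : ∀ᶠ σ : ℝ in 𝓝[>] 0, σ ∈ Set.Ioc (0 : ℝ) 1 := Ioc_mem_nhdsGT zero_lt_one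
  have hL : Tendsto (fun σ : ℝ => ∫ ξ : ℝ, H (1 + σ + 2 * Real.pi * ξ * Complex.I) *
        (Complex.exp (2 * Real.pi * v * ξ * Complex.I) * (pntg T ξ : ℂ))) (𝓝[>] 0)
      (𝓝 (∫ ξ : ℝ, H (1 + 2 * Real.pi * ξ * Complex.I) *
        (Complex.exp (2 * Real.pi * v * ξ * Complex.I) * (pntg T ξ : ℂ)))) := by
    refine tendsto_integral_filter_of_dominated_convergence (fun ξ => M * pntg T ξ) ?_ ?_ ?_ ?_
    · filter_upwards [hev] with σ hσ
      refine Continuous.aestronglyMeasurable ?_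
      refine Continuous.mul ?_ ?_
      · refine hc.comp_continuous (by fun_prop) fun ξ => ?_
        simp [hσ.1.le]
      · have := pntg_continuous T
        fun_prop
    · filter_upwards [hev] with σ hσ
      refine Eventually.of_forall fun ξ => ?_
      rw [norm_mul, norm_mul, hnexp, one_mul, Complex.norm_real, Real.norm_of_nonneg (pntg_nonneg T ξ)]
      by_cases hξ : ξ ∈ Set.Ioc (-T) T
      · exact mul_le_mul_of_nonneg_right (hM (σ, ξ) ⟨Set.Ioc_subset_Icc_self hσ,
          Set.Ioc_subset_Icc_self hξ⟩) (pntg_nonneg _ _)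
      · rw [pntg_eq_zero hT hξ]; simp
    · exact (pntg_integrable hT).const_mul M
    · refine Eventually.of_forall fun ξ => Tendsto.mul_const _ ?_
      have h1 : ContinuousOn (fun σ : ℝ => H (1 + σ + 2 * Real.pi * ξ * Complex.I)) (Set.Ici 0) := by
        refine hc.comp (Continuous.continuousOn (by fun_prop)) fun p hp => ?_
        simp only [Set.mem_ofPred_eq]
        simpa using hp
      have h2 := (h1 0 (Set.mem_Ici.2 le_rfl)).mono_left (nhdsWithin_mono _ Set.Ioi_subset_Ici_self)
      simpa using h2
  have hbd : ∀ u : ℝ, ‖(pntB u : ℂ) - 1‖ ≤ Real.log 4 + 5 := by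
    intro u
    have : ‖(pntB u : ℂ)‖ ≤ Real.log 4 + 4 := by
      rw [Complex.norm_real, Real.norm_of_nonneg (pntB_nonneg u)]; exact pntB_le u
    calc _ ≤ ‖(pntB u : ℂ)‖ + ‖(1 : ℂ)‖ := norm_sub_le _ _
      _ ≤ _ := by rw [norm_one]; linarith
  have hKi : Integrable (fun u => pntK T (u - v)) := (pntK_integrable hT).comp_sub_right v
  have hR : Tendsto (fun σ : ℝ => ∫ u in Set.Ioi (0 : ℝ),
        (((pntB u : ℂ) - 1) * Complex.exp (-σ * u)) * (pntK T (u - v) : ℂ)) (𝓝[>] 0)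
      (𝓝 (∫ u in Set.Ioi (0 : ℝ), ((pntB u : ℂ) - 1) * (pntK T (u - v) : ℂ))) := by
    refine tendsto_integral_filter_of_dominated_convergence
      (fun u => (Real.log 4 + 5) * pntK T (u - v)) ?_ ?_ ?_ ?_
    · refine Eventually.of_forall fun σ => Measurable.aestronglyMeasurable ?_
      refine Measurable.mul (Measurable.mul
        ((Complex.measurable_ofReal.comp pntB_measurable).sub_const 1) ?_) ?_
      · exact Continuous.measurable (by fun_prop)
      · have := pntK_continuous T
        exact Continuous.measurable (by fun_prop)
    · filter_upwards [hev] with σ hσ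
      filter_upwards [ae_restrict_mem measurableSet_Ioi] with u hu
      rw [norm_mul, norm_mul, Complex.norm_real, Real.norm_of_nonneg (pntK_nonneg hT.le _)]
      refine mul_le_mul_of_nonneg_right ?_ (pntK_nonneg hT.le _)
      have : ‖Complex.exp (-σ * u)‖ ≤ 1 := by
        rw [Complex.norm_exp, Real.exp_le_one_iff]
        have : 0 ≤ σ * u := mul_nonneg hσ.1.le (le_of_lt hu)
        simpa using this
      calc _ ≤ ‖(pntB u : ℂ) - 1‖ * 1 := by gcongr
        _ ≤ _ := by rw [mul_one]; exact hbd u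
    · exact (hKi.const_mul _).integrableOn
    · refine Eventually.of_forall fun u => Tendsto.mul_const _ ?_
      have h1 : Continuous (fun σ : ℝ => ((pntB u : ℂ) - 1) * Complex.exp (-σ * u)) := by fun_prop
      have := (h1.tendsto 0).mono_left (nhdsWithin_le_nhds (s := Set.Ioi 0))
      simpa using this
  refine tendsto_nhds_unique (hL.congr' ?_) hR
  filter_upwards [hev] with σ hσ
  exact pnt_identity hH hT hσ.1 v

lemma pnt_smoothed {T : ℝ} (hT : 0 < T) :
    Tendsto (fun v : ℝ => ∫ u in Set.Ioi (0 : ℝ), (pntB u - 1) * pntK T (u - v)) atTop (𝓝 0) := by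
  obtain ⟨H, hc, hH⟩ := pnt_continuation
  have h1 := Real.tendsto_integral_exp_smul_cocompact
    (fun ξ : ℝ => H (1 + 2 * Real.pi * ξ * Complex.I) * (pntg T ξ : ℂ))
  have h2 : Tendsto (fun v : ℝ => -v) atTop (cocompact ℝ) :=
    tendsto_neg_atTop_atBot.mono_right atBot_le_cocompact
  have h3 := h1.comp h2
  have h4 : Tendsto (fun v : ℝ => ((∫ u in Set.Ioi (0 : ℝ), (pntB u - 1) * pntK T (u - v) : ℝ) : ℂ))
      atTop (𝓝 0) := by
    refine h3.congr fun v => ?_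
    have := pnt_identity_zero hc hH hT v
    rw [← integral_complex_ofReal]
    push_cast
    rw [← this]
    refine integral_congr_ae (Eventually.of_forall fun ξ => ?_)
    simp only [Circle.smul_def, Real.fourierChar_apply, smul_eq_mul]
    rw [mul_left_comm]
    congr 3
    push_cast; ring
  have h5 := (Complex.continuous_re.tendsto 0).comp h4
  simpa [Function.comp_def] using h5
lemma pntK_integral {T : ℝ} (hT : 0 < T) : ∫ x, pntK T x = ∫ x, pntK 1 x := by
  simp_rw [pntK_scale T]
  rw [integral_const_mul, Measure.integral_comp_mul_left, abs_of_pos (inv_pos.2 hT), smul_eq_mul,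
    ← mul_assoc, mul_inv_cancel₀ hT.ne', one_mul]

lemma pntK_tail {T : ℝ} (hT : 0 < T) :
    Tendsto (fun v : ℝ => ∫ u in Set.Ioi (0 : ℝ), pntK T (u - v)) atTop (𝓝 (∫ x, pntK 1 x)) := by
  have e : ∀ v : ℝ, ∫ u in Set.Ioi (0 : ℝ), pntK T (u - v) =
      ∫ w, (Set.Ioi (-v)).indicator (pntK T) w := by
    intro v
    rw [← integral_indicator measurableSet_Ioi,
      ← integral_add_right_eq_self _ v]
    refine integral_congr_ae (Eventually.of_forall fun w => ?_)
    simp only [Set.indicator_apply, Set.mem_Ioi, add_sub_cancel_right, neg_lt_iff_pos_add]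
  simp_rw [e]
  rw [← pntK_integral hT]
  refine tendsto_integral_filter_of_dominated_convergence (pntK T) ?_ ?_ (pntK_integrable hT) ?_
  · exact Eventually.of_forall fun v =>
      (pntK_continuous T).aestronglyMeasurable.indicator measurableSet_Ioi
  · refine Eventually.of_forall fun v => Eventually.of_forall fun w => ?_
    refine (norm_indicator_le_norm_self _ _).trans ?_
    rw [Real.norm_of_nonneg (pntK_nonneg hT.le w)]
  · refine Eventually.of_forall fun w => ?_
    refine tendsto_const_nhds.congr' ?_
    filter_upwards [eventually_gt_atTop (-w)] with v hv
    rw [Set.indicator_of_mem]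
    simp only [Set.mem_Ioi]; linarith

lemma pntB_mul_integrable {k : ℝ → ℝ} (hk : Integrable k) (p : ℝ → ℝ) (hp : Measurable p) :
    Integrable fun w => pntB (p w) * k w := by
  refine Integrable.bdd_mul (c := Real.log 4 + 4) hk
    (pntB_measurable.comp hp).aestronglyMeasurable (Eventually.of_forall fun u => ?_)
  rw [Real.norm_of_nonneg (pntB_nonneg _)]; exact pntB_le _

lemma pnt_J {T : ℝ} (hT : 0 < T) :
    Tendsto (fun v : ℝ => ∫ w, pntB (w / T + v) * pntK 1 w) atTop (𝓝 (∫ x, pntK 1 x)) := by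
  have h := (pnt_smoothed hT).add (pntK_tail hT)
  rw [zero_add] at h
  refine h.congr fun v => ?_
  have hKi : Integrable (fun u => pntK T (u - v)) := (pntK_integrable hT).comp_sub_right v
  have hi := pntB_mul_integrable hKi id measurable_id
  have h1 : Integrable (fun u => (pntB u - 1) * pntK T (u - v)) := by
    refine (hi.sub hKi).congr (Eventually.of_forall fun u => ?_)
    simp only [Pi.sub_apply, id]; ring
  rw [← integral_add h1.integrableOn hKi.integrableOn]
  have h2 : ∫ u in Set.Ioi (0 : ℝ), ((pntB u - 1) * pntK T (u - v) + pntK T (u - v)) =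
      ∫ u in Set.Ioi (0 : ℝ), pntB u * pntK T (u - v) := by
    congr 1; funext u; ring
  rw [h2, setIntegral_eq_integral_of_forall_compl_eq_zero
    (fun u hu => by rw [pntB_of_nonpos (not_lt.1 hu), zero_mul])]
  rw [← integral_add_right_eq_self _ v]
  have h3 := Measure.integral_comp_mul_left (fun w => pntB (w / T + v) * pntK 1 w) T
  rw [abs_of_pos (inv_pos.2 hT), smul_eq_mul] at h3
  have h4 : ∫ w, pntB (w / T + v) * pntK 1 w =
      T * ∫ x, pntB (T * x / T + v) * pntK 1 (T * x) := by
    rw [h3, ← mul_assoc, mul_inv_cancel₀ hT.ne', one_mul]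
  rw [h4, ← integral_const_mul]
  refine integral_congr_ae (Eventually.of_forall fun w => ?_)
  simp only [add_sub_cancel_right]
  rw [pntK_scale T w, mul_div_cancel_left₀ _ hT.ne']
  ring

lemma pnt_upper {R T : ℝ} (hT : 0 < T) (hR : 0 < R) (v : ℝ) :
    pntB (v - R / T) * Real.exp (-(2 * R / T)) * (∫ w in (-R)..R, pntK 1 w) ≤
      ∫ w, pntB (w / T + v) * pntK 1 w := by
  have hi := pntB_mul_integrable pntK_one_integrable (fun w => w / T + v) (by fun_prop)
  rw [intervalIntegral.integral_of_le (by linarith), ← integral_const_mul]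
  calc _ ≤ ∫ w in Set.Ioc (-R) R, pntB (w / T + v) * pntK 1 w := by
        refine setIntegral_mono_on (pntK_one_integrable.const_mul _).integrableOn hi.integrableOn
          measurableSet_Ioc fun w hw => ?_
        refine mul_le_mul_of_nonneg_right ?_ (pntK_nonneg zero_le_one w)
        have h1 : -(R / T) ≤ w / T := by
          rw [← neg_div]; exact div_le_div_of_nonneg_right hw.1.le hT.le
        have h2 : w / T ≤ R / T := div_le_div_of_nonneg_right hw.2 hT.le
        refine le_trans ?_ (pntB_mono (u := v - R / T) (v := w / T + v) (by linarith))
        refine mul_le_mul_of_nonneg_left (Real.exp_le_exp.2 ?_) (pntB_nonneg _)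
        rw [mul_div_assoc]; linarith
    _ ≤ _ := setIntegral_le_integral hi (Eventually.of_forall fun w =>
        mul_nonneg (pntB_nonneg _) (pntK_nonneg zero_le_one w))

lemma pnt_lower {R T : ℝ} (hT : 0 < T) (hR : 0 < R) (v : ℝ) :
    ∫ w, pntB (w / T + v) * pntK 1 w ≤
      pntB (v + R / T) * Real.exp (2 * R / T) * (∫ w in (-R)..R, pntK 1 w) +
      (Real.log 4 + 4) * ((∫ w, pntK 1 w) - ∫ w in (-R)..R, pntK 1 w) := by
  have hi := pntB_mul_integrable pntK_one_integrable (fun w => w / T + v) (by fun_prop)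
  rw [intervalIntegral.integral_of_le (by linarith),
    ← integral_add_compl (measurableSet_Ioc (a := -R) (b := R)) hi,
    ← integral_add_compl (measurableSet_Ioc (a := -R) (b := R)) pntK_one_integrable,
    add_sub_cancel_left, ← integral_const_mul, ← integral_const_mul]
  refine add_le_add ?_ ?_
  · refine setIntegral_mono_on hi.integrableOn (pntK_one_integrable.const_mul _).integrableOn
      measurableSet_Ioc fun w hw => ?_
    refine mul_le_mul_of_nonneg_right ?_ (pntK_nonneg zero_le_one w)
    have h1 : -(R / T) ≤ w / T := by
      rw [← neg_div]; exact div_le_div_of_nonneg_right hw.1.le hT.le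
    have h2 : w / T ≤ R / T := div_le_div_of_nonneg_right hw.2 hT.le
    have h3 := pntB_mono (u := w / T + v) (v := v + R / T) (by linarith)
    calc pntB (w / T + v) = pntB (w / T + v) * Real.exp (w / T + v - (v + R / T)) *
          Real.exp (-(w / T + v - (v + R / T))) := by
            rw [mul_assoc, ← Real.exp_add, add_neg_cancel, Real.exp_zero, mul_one]
      _ ≤ pntB (v + R / T) * Real.exp (2 * R / T) := by
            refine mul_le_mul h3 (Real.exp_le_exp.2 ?_) (Real.exp_pos _).le (pntB_nonneg _)
            rw [mul_div_assoc]; linarith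
  · refine setIntegral_mono_on hi.integrableOn (pntK_one_integrable.const_mul _).integrableOn
      measurableSet_Ioc.compl fun w hw => ?_
    exact mul_le_mul_of_nonneg_right (pntB_le _) (pntK_nonneg zero_le_one w)

theorem pntB_tendsto : Tendsto pntB atTop (𝓝 1) := by
  set c := ∫ w, pntK 1 w with hcdef
  have hc : 0 < c := pntK_one_pos
  set cR : ℝ → ℝ := fun R => ∫ w in (-R)..R, pntK 1 w with hcR
  have hcRt : Tendsto cR atTop (𝓝 c) :=
    intervalIntegral_tendsto_integral pntK_one_integrable tendsto_neg_atTop_atBot tendsto_id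
  have hE : Tendsto (fun R : ℝ => 2 * R / R ^ 2) atTop (𝓝 0) := by
    have : Tendsto (fun R : ℝ => 2 / R) atTop (𝓝 0) := tendsto_const_nhds.div_atTop tendsto_id
    refine this.congr' ?_
    filter_upwards [eventually_gt_atTop 0] with R hR
    field_simp
  have hEp := (Real.continuous_exp.tendsto 0).comp hE
  have hEn := (Real.continuous_exp.tendsto 0).comp (by simpa using hE.neg)
  rw [Real.exp_zero] at hEp hEn
  have hU : Tendsto (fun R : ℝ => c / (Real.exp (-(2 * R / R ^ 2)) * cR R)) atTop (𝓝 1) := by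
    have := (tendsto_const_nhds (x := c)).div (hEn.mul hcRt) (by simpa using hc.ne')
    simpa [hc.ne', Function.comp_def, Pi.div_def] using this
  have hL : Tendsto (fun R : ℝ => (c - (Real.log 4 + 4) * (c - cR R)) /
      (Real.exp (2 * R / R ^ 2) * cR R)) atTop (𝓝 1) := by
    have := ((tendsto_const_nhds (x := c)).sub (((tendsto_const_nhds (x := c)).sub
      hcRt).const_mul (Real.log 4 + 4))).div (hEp.mul hcRt) (by simpa using hc.ne')
    simpa [hc.ne', Function.comp_def, Pi.div_def] using this
  rw [tendsto_order]
  constructor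
  · intro a ha
    obtain ⟨R, hR1, hR2, hR3⟩ := ((hL.eventually (lt_mem_nhds ha)).and
      ((eventually_gt_atTop (0 : ℝ)).and (hcRt.eventually (lt_mem_nhds hc)))).exists
    have hT : 0 < R ^ 2 := by positivity
    have hden : 0 < Real.exp (2 * R / R ^ 2) * cR R := mul_pos (Real.exp_pos _) hR3
    have hJ := ((pnt_J hT).sub_const ((Real.log 4 + 4) * (c - cR R))).div_const
      (Real.exp (2 * R / R ^ 2) * cR R)
    have h1 := hJ.eventually (lt_mem_nhds hR1)
    have h2 := (tendsto_atTop_add_const_right atTop (-(R / R ^ 2)) tendsto_id).eventually h1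
    filter_upwards [h2] with v hv
    refine hv.trans_le ?_
    rw [div_le_iff₀ hden]
    have := pnt_lower hT hR2 (id v + -(R / R ^ 2))
    simp only [id] at this ⊢
    rw [neg_add_cancel_right] at this
    linarith
  · intro a ha
    obtain ⟨R, hR1, hR2, hR3⟩ := ((hU.eventually (gt_mem_nhds ha)).and
      ((eventually_gt_atTop (0 : ℝ)).and (hcRt.eventually (lt_mem_nhds hc)))).exists
    have hT : 0 < R ^ 2 := by positivity
    have hden : 0 < Real.exp (-(2 * R / R ^ 2)) * cR R := mul_pos (Real.exp_pos _) hR3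
    have hJ := (pnt_J hT).div_const (Real.exp (-(2 * R / R ^ 2)) * cR R)
    have h1 := hJ.eventually (gt_mem_nhds hR1)
    have h2 := (tendsto_atTop_add_const_right atTop (R / R ^ 2) tendsto_id).eventually h1
    filter_upwards [h2] with v hv
    refine lt_of_le_of_lt ?_ hv
    rw [le_div_iff₀ hden]
    have := pnt_upper hT hR2 (id v + R / R ^ 2)
    simp only [id] at this ⊢
    rw [add_sub_cancel_right] at this
    linarith

theorem pnt_theta : Tendsto (fun x : ℝ => Chebyshev.theta x / x) atTop (𝓝 1) := by
  have hpsi : Tendsto (fun x : ℝ => Chebyshev.psi x / x) atTop (𝓝 1) := by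
    refine (pntB_tendsto.comp Real.tendsto_log_atTop).congr' ?_
    filter_upwards [eventually_gt_atTop 0] with x hx
    simp only [Function.comp, pntB]
    rw [Real.exp_neg, Real.exp_log hx, div_eq_mul_inv]
  obtain ⟨C, hC⟩ := Chebyshev.psi_sub_theta_le_mul_sqrt
  have h1 : Tendsto (fun x : ℝ => (Chebyshev.psi x - Chebyshev.theta x) / x) atTop (𝓝 0) := by
    have h2 : Tendsto (fun x : ℝ => C / Real.sqrt x) atTop (𝓝 0) :=
      tendsto_const_nhds.div_atTop Real.tendsto_sqrt_atTop
    refine tendsto_of_tendsto_of_tendsto_of_le_of_le' tendsto_const_nhds h2 ?_ ?_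
    · filter_upwards [eventually_gt_atTop 0] with x hx
      exact div_nonneg (sub_nonneg.2 (Chebyshev.theta_le_psi x)) hx.le
    · filter_upwards [eventually_gt_atTop 0] with x hx
      rw [div_le_div_iff₀ hx (Real.sqrt_pos.2 hx)]
      calc _ ≤ C * Real.sqrt x * Real.sqrt x :=
            mul_le_mul_of_nonneg_right (hC x) (Real.sqrt_nonneg x)
        _ = _ := by rw [mul_assoc, Real.mul_self_sqrt hx.le]
  have := hpsi.sub h1
  rw [sub_zero] at this
  refine this.congr fun x => ?_
  ring
lemma primorialN_pos (k : ℕ) : 0 < primorialN k :=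
  Finset.prod_pos fun i _ => (Nat.prime_nth_prime i).pos

lemma primorialN_succ (k : ℕ) : primorialN (k + 1) = primorialN k * Nat.nth Nat.Prime k :=
  Finset.prod_range_succ _ _

lemma primorialN_mono : Monotone primorialN := by
  refine monotone_nat_of_le_succ fun k => ?_
  rw [primorialN_succ]
  exact Nat.le_mul_of_pos_right _ (Nat.prime_nth_prime k).pos

lemma primorialN_ge (k : ℕ) : k ≤ primorialN k := by
  refine (Nat.lt_two_pow_self (n := k)).le.trans ?_
  unfold primorialN
  calc 2 ^ k = ∏ _i ∈ Finset.range k, 2 := by simp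
    _ ≤ _ := Finset.prod_le_prod' fun i _ => (Nat.prime_nth_prime i).two_le

lemma log_primorialN_succ (k : ℕ) :
    Real.log (primorialN (k + 1)) = Chebyshev.theta (Nat.nth Nat.Prime k) := by
  rw [Chebyshev.theta_eq_sum_Icc, Nat.floor_natCast, primorialN, Nat.cast_prod,
    Real.log_prod (fun i _ => by exact_mod_cast (Nat.prime_nth_prime i).ne_zero)]
  refine Finset.sum_nbij (fun i => Nat.nth Nat.Prime i) ?_ ?_ ?_ ?_
  · intro i hi
    simp only [Finset.mem_range] at hi
    simp only [Finset.mem_filter, Finset.mem_Icc, Nat.zero_le, true_and]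
    exact ⟨(Nat.nth_le_nth Nat.infinite_setOfPred_prime).2 (by omega), Nat.prime_nth_prime i⟩
  · exact (Nat.nth_injective Nat.infinite_setOfPred_prime).injOn
  · intro p hp
    simp only [Finset.coe_filter, Finset.mem_Icc, Set.mem_ofPred_eq, Nat.zero_le, true_and] at hp
    refine ⟨Nat.count Nat.Prime p, ?_, Nat.nth_count hp.2⟩
    simp only [Finset.coe_range, Set.mem_Iio]
    have h := hp.1
    rw [← Nat.nth_count hp.2, Nat.nth_le_nth Nat.infinite_setOfPred_prime] at h
    omega
  · intro i _; rfl

lemma nth_prime_succ_le (k : ℕ) : Nat.nth Nat.Prime (k + 1) ≤ 2 * Nat.nth Nat.Prime k := by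
  obtain ⟨q, hq, h1, h2⟩ := Nat.exists_prime_lt_and_le_two_mul _ (Nat.prime_nth_prime k).ne_zero
  refine le_trans ?_ h2
  rw [← Nat.nth_count hq] at h1 ⊢
  rw [Nat.nth_lt_nth Nat.infinite_setOfPred_prime] at h1
  rw [Nat.nth_le_nth Nat.infinite_setOfPred_prime]
  omega

lemma floorIndex_bdd (y : ℝ) : BddAbove {n : ℕ | (primorialN n : ℝ) ≤ y} := by
  refine ⟨⌊y⌋₊, fun n hn => Nat.le_floor ?_⟩
  exact le_trans (by exact_mod_cast primorialN_ge n) hn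

lemma floorIndex_ge {y : ℝ} {m : ℕ} (h : (primorialN m : ℝ) ≤ y) : m ≤ primorialFloorIndex y :=
  le_csSup (floorIndex_bdd y) h

lemma floorIndex_le {y : ℝ} (hy : 1 ≤ y) : (primorialN (primorialFloorIndex y) : ℝ) ≤ y := by
  have : primorialFloorIndex y ∈ {n : ℕ | (primorialN n : ℝ) ≤ y} :=
    Nat.sSup_mem ⟨0, by simpa [primorialN] using hy⟩ (floorIndex_bdd y)
  exact this

lemma floorIndex_lt (y : ℝ) : y < primorialN (primorialFloorIndex y + 1) := by
  by_contra h
  have := floorIndex_ge (not_lt.1 h)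
  omega

lemma floorIndex_tendsto : Tendsto primorialFloorIndex atTop atTop := by
  refine tendsto_atTop.2 fun m => ?_
  filter_upwards [eventually_ge_atTop (primorialN m : ℝ)] with y hy using floorIndex_ge hy

/-- If `n(y)` is the largest index with `𝒫_{n(y)} ≤ y`, then `p_{n(y)} ∼ log y` as `y → ∞`. -/
theorem nthPrime_primorialFloorIndex_asymp :
    Filter.Tendsto (fun y : ℝ => (nthPrime (primorialFloorIndex y) : ℝ) / Real.log y)
      Filter.atTop (nhds 1) := by
  have hP : Tendsto (fun y : ℝ => (nthPrime (primorialFloorIndex y) : ℝ)) atTop atTop := by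
    refine tendsto_natCast_atTop_atTop.comp ?_
    have h1 : Tendsto (fun y : ℝ => primorialFloorIndex y - 1) atTop atTop :=
      (tendsto_sub_atTop_nat 1).comp floorIndex_tendsto
    exact (Nat.nth_strictMono Nat.infinite_setOfPred_prime).tendsto_atTop.comp h1
  have hth := pnt_theta.comp hP
  have hlog : Tendsto (fun x : ℝ => Real.log (2 * x) / x) atTop (𝓝 0) := by
    have h1 : Tendsto (fun x : ℝ => Real.log x / x) atTop (𝓝 0) :=
      Real.isLittleO_log_id_atTop.tendsto_div_nhds_zero
    have h2 := h1.comp (tendsto_id.const_mul_atTop (two_pos : (0 : ℝ) < 2))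
    have h3 := h2.const_mul 2
    rw [mul_zero] at h3
    refine h3.congr fun x => ?_
    simp only [Function.comp, id]
    rw [mul_div_assoc', mul_div_mul_left _ _ two_ne_zero]
  have hup := hth.add (hlog.comp hP)
  rw [add_zero] at hup
  have key : Tendsto (fun y : ℝ => Real.log y / (nthPrime (primorialFloorIndex y) : ℝ)) atTop (𝓝 1) := by
    have hbase : ∀ᶠ y : ℝ in atTop, 2 ≤ y ∧ 1 ≤ primorialFloorIndex y :=
      (eventually_ge_atTop 2).and (floorIndex_tendsto.eventually (eventually_ge_atTop 1))
    refine tendsto_of_tendsto_of_tendsto_of_le_of_le' hth hup ?_ ?_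
    · filter_upwards [hbase] with y hy
      obtain ⟨k, hk⟩ : ∃ k, primorialFloorIndex y = k + 1 := ⟨primorialFloorIndex y - 1, by omega⟩
      simp only [Function.comp]
      refine div_le_div_of_nonneg_right ?_ (Nat.cast_nonneg _)
      have h1 := floorIndex_le (y := y) (by linarith [hy.1])
      rw [hk] at h1 ⊢
      simp only [nthPrime, Nat.add_sub_cancel]
      rw [← log_primorialN_succ]
      exact Real.log_le_log (by exact_mod_cast primorialN_pos _) h1
    · filter_upwards [hbase] with y hy
      obtain ⟨k, hk⟩ : ∃ k, primorialFloorIndex y = k + 1 := ⟨primorialFloorIndex y - 1, by omega⟩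
      simp only [Function.comp]
      rw [← add_div]
      refine div_le_div_of_nonneg_right ?_ (Nat.cast_nonneg _)
      have h1 := floorIndex_lt y
      rw [hk] at h1 ⊢
      simp only [nthPrime, Nat.add_sub_cancel]
      rw [← log_primorialN_succ]
      have hpos : (0 : ℝ) < primorialN (k + 1) := by exact_mod_cast primorialN_pos _
      have hq : (0 : ℝ) < Nat.nth Nat.Prime k := by exact_mod_cast (Nat.prime_nth_prime k).pos
      rw [← Real.log_mul hpos.ne' (by positivity)]
      refine Real.log_le_log (by linarith [hy.1]) (h1.le.trans ?_)
      rw [primorialN_succ (k + 1), Nat.cast_mul]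
      refine mul_le_mul_of_nonneg_left ?_ hpos.le
      exact_mod_cast nth_prime_succ_le k
  have := key.inv₀ one_ne_zero
  rw [inv_one] at this
  refine this.congr fun y => ?_
  rw [inv_div]
end

section
/- For a real y ≥ 2, let ⌊y⌋_𝒫 denote the largest primorial not exceeding y, and let q(y) be its largest prime factor (with q(2)... defined via ⌊y⌋_𝒫 = 𝒫_n and q(y) = p_n). Then for every ε > 0 and all sufficiently large y, (1 − ε)·log y ≤ q(y) ≤ (1 + ε)·log y; equivalently, ϑ(p_n) ≤ log y < ϑ(p_{n+1}) where ϑ(t) = Σ_{p ≤ t} log p is Chebyshev's function and 𝒫_n = ⌊y⌋_𝒫. -/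
open Filter Real

namespace PNTAux
open MeasureTheory Topology

/-- Fejer kernel (unnormalised). -/
noncomputable def K (v : ℝ) : ℝ := if v = 0 then 1 else 2 * (1 - Real.cos v) / v ^ 2

lemma K_nonneg (v : ℝ) : 0 ≤ K v := by
  unfold K
  split_ifs
  · norm_num
  · have := Real.cos_le_one v
    positivity [sub_nonneg.2 this]

lemma K_le (v : ℝ) : K v ≤ 5 * (1 + v ^ 2)⁻¹ := by
  unfold K
  split_ifs with h
  · subst h; norm_num
  · have h2 : 0 < v ^ 2 := by positivity
    rw [← div_eq_mul_inv, div_le_div_iff₀ h2 (by positivity)]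
    have h3 := Real.one_sub_sq_div_two_le_cos (x := v)
    have h4 := Real.neg_one_le_cos v
    nlinarith

lemma K_ge {v : ℝ} (hv : |v| ≤ 1) : 1 / 4 ≤ K v := by
  unfold K
  split_ifs with h
  · norm_num
  · have h2 : 0 < v ^ 2 := by positivity
    rw [le_div_iff₀ h2]
    have h3 := Real.cos_le_one_sub_mul_cos_sq (x := v) (hv.trans (by linarith [Real.pi_gt_three]))
    have h5 : 1 / 8 ≤ 2 / π ^ 2 := by
      rw [div_le_div_iff₀ (by norm_num) (by positivity)]
      nlinarith [Real.pi_le_four, Real.pi_pos]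
    nlinarith

lemma K_meas : Measurable K := by
  unfold K
  refine Measurable.ite (measurableSet_singleton 0) measurable_const ?_
  fun_prop

lemma K_integrable : Integrable K := by
  refine (integrable_inv_one_add_sq.const_mul 5).mono' K_meas.aestronglyMeasurable ?_
  refine Eventually.of_forall fun v => ?_
  rw [Real.norm_of_nonneg (K_nonneg v)]
  exact K_le v

lemma K_real (v : ℝ) : ∫ y in (0:ℝ)..1, (1 - y) * (2 * Real.cos (y * v)) = K v := by
  unfold K
  split_ifs with h
  · subst h
    have : ∫ x in (0:ℝ)..1, (1 - x) = 1 / 2 := by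
      rw [intervalIntegral.integral_sub (by simp) (by simp)]
      simp
      norm_num
    simp [this]
  · have : ∀ y ∈ Set.uIcc (0:ℝ) 1, HasDerivAt (fun y => (1 - y) * (2 * Real.sin (y * v) / v)
        - 2 * Real.cos (y * v) / v ^ 2) ((1 - y) * (2 * Real.cos (y * v))) y := by
      intro y _
      have h1 : HasDerivAt (fun y : ℝ => y * v) v y := by simpa using (hasDerivAt_id y).mul_const v
      have := (((hasDerivAt_id y).const_sub 1).mul ((h1.sin.const_mul 2).div_const v)).sub
        ((h1.cos.const_mul 2).div_const (v ^ 2))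
      convert! this using 1
      simp only [id]
      field_simp
      ring
    rw [intervalIntegral.integral_eq_sub_of_hasDerivAt this
      (Continuous.intervalIntegrable (by fun_prop) _ _)]
    simp
    field_simp
    ring

lemma K_complex (v : ℝ) :
    ∫ y in (-1:ℝ)..1, ((1 - |y| : ℝ) : ℂ) * Complex.exp (Complex.I * (y * v)) = (K v : ℂ) := by
  have hc : Continuous fun y : ℝ => ((1 - |y| : ℝ) : ℂ) * Complex.exp (Complex.I * (y * v)) := by
    fun_prop
  rw [← intervalIntegral.integral_add_adjacent_intervals (b := 0)
    (hc.intervalIntegrable _ _) (hc.intervalIntegrable _ _)]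
  have := intervalIntegral.integral_comp_neg (a := 0) (b := 1)
    (fun y : ℝ => ((1 - |y| : ℝ) : ℂ) * Complex.exp (Complex.I * (y * v)))
  rw [neg_zero] at this
  rw [← this, ← intervalIntegral.integral_add
    (Continuous.intervalIntegrable (by fun_prop) _ _) (hc.intervalIntegrable _ _),
    ← K_real, ← intervalIntegral.integral_ofReal]
  refine intervalIntegral.integral_congr fun y hy => ?_
  rw [Set.uIcc_of_le zero_le_one] at hy
  simp only [abs_neg, abs_of_nonneg hy.1]
  push_cast
  rw [Complex.two_cos]
  rw [← mul_add]
  congr 1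
  rw [add_comm]
  congr 2 <;> ring

lemma core (b : ℝ → ℝ) (hb : Measurable b) (M : ℝ) (hM : ∀ t, |b t| ≤ M) (ε δ : ℝ)
    (hε : 0 < ε) (hδ : 0 < δ) : ∃ l : ℝ, 0 < l ∧ ∀ u, (∀ t, |t - u| ≤ δ → ε ≤ b t) →
      ε / 4 ≤ ∫ w, b (u - w / l) * K w := by
  have hM0 : 0 ≤ M := (abs_nonneg _).trans (hM 0)
  have htail : Tendsto (fun R : ℝ => ∫ w, Set.indicator {w : ℝ | R < |w|} K w) atTop (𝓝 0) := by
    have := tendsto_integral_filter_of_dominated_convergence (μ := volume) (l := (atTop : Filter ℝ))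
      (F := fun R w => Set.indicator {w : ℝ | R < |w|} K w) (f := fun _ => (0:ℝ)) K ?_ ?_
        K_integrable ?_
    · simpa using this
    · refine Eventually.of_forall fun R => ?_
      exact (K_meas.indicator (measurableSet_lt measurable_const measurable_id.abs)).aestronglyMeasurable
    · refine Eventually.of_forall fun R => Eventually.of_forall fun w => ?_
      rw [Real.norm_of_nonneg (Set.indicator_nonneg (fun w _ => K_nonneg w) w)]
      exact Set.indicator_le_self' (fun w _ => K_nonneg w) w
    · refine Eventually.of_forall fun w => ?_
      refine tendsto_const_nhds.congr' ?_
      filter_upwards [eventually_ge_atTop |w|] with R hR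
      rw [Set.indicator_of_notMem]
      simpa using hR
  have h1 : ∀ᶠ R : ℝ in atTop, ∫ w, Set.indicator {w : ℝ | R < |w|} K w < ε / (4 * (M + 1)) :=
    htail.eventually_lt_const (by positivity)
  obtain ⟨R, hR, hR1⟩ := (h1.and (eventually_ge_atTop 1)).exists
  refine ⟨R / δ, by positivity, fun u hu => ?_⟩
  have hms : MeasurableSet {w : ℝ | R < |w|} := measurableSet_lt measurable_const measurable_id.abs
  have hi1 : Integrable (Set.indicator (Set.Icc (-1:ℝ) 1) (fun _ => ε / 4)) := by
    rw [integrable_indicator_iff measurableSet_Icc]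
    exact integrableOn_const (by simp)
  have hi2 : Integrable (Set.indicator {w : ℝ | R < |w|} K) := K_integrable.indicator hms
  calc ε / 4 ≤ (∫ w, Set.indicator (Set.Icc (-1:ℝ) 1) (fun _ => ε / 4) w)
        - M * ∫ w, Set.indicator {w : ℝ | R < |w|} K w := by
        rw [integral_indicator measurableSet_Icc]
        simp only [integral_const, MeasurableSet.univ, measureReal_restrict_apply, Set.univ_inter,
          Real.volume_real_Icc, smul_eq_mul]
        have : M * (ε / (4 * (M + 1))) ≤ ε / 4 := by
          rw [mul_div_assoc', div_le_div_iff₀ (by positivity) (by positivity)]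
          nlinarith
        have := mul_le_mul_of_nonneg_left hR.le hM0
        norm_num
        linarith
    _ = ∫ w, (Set.indicator (Set.Icc (-1:ℝ) 1) (fun _ => ε / 4) w
          - M * Set.indicator {w : ℝ | R < |w|} K w) := by
        rw [integral_sub hi1 (hi2.const_mul M), integral_const_mul]
    _ ≤ _ := by
        refine integral_mono (hi1.sub (hi2.const_mul M)) ?_ ?_
        · refine (K_integrable.const_mul M).mono' ?_ (Eventually.of_forall fun w => ?_)
          · exact ((hb.comp (by fun_prop)).mul K_meas).aestronglyMeasurable
          · rw [norm_mul, Real.norm_of_nonneg (K_nonneg w)]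
            exact mul_le_mul_of_nonneg_right (hM _) (K_nonneg w)
        · intro w
          have hK := K_nonneg w
          simp only
          by_cases hw : R < |w|
          · have hn : w ∉ Set.Icc (-1:ℝ) 1 := by
              intro hc
              have := abs_le.2 hc
              linarith
            rw [Set.indicator_of_notMem hn, Set.indicator_of_mem (by exact hw)]
            have := (abs_le.1 (hM (u - w / (R / δ)))).1
            nlinarith
          · rw [Set.indicator_of_notMem (s := {w : ℝ | R < |w|}) (by exact hw)]
            have hb1 : ε ≤ b (u - w / (R / δ)) := by
              apply hu
              rw [sub_sub_cancel_left, abs_neg, abs_div, abs_of_pos (show 0 < R / δ by positivity),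
                div_le_iff₀ (by positivity)]
              rw [mul_div_cancel₀ _ hδ.ne']
              linarith
            by_cases hw1 : w ∈ Set.Icc (-1:ℝ) 1
            · rw [Set.indicator_of_mem hw1]
              have := K_ge (abs_le.2 hw1)
              nlinarith
            · rw [Set.indicator_of_notMem hw1]
              nlinarith


lemma fubini_identity (b : ℝ → ℝ) (hb : Measurable b) (M : ℝ) (hM : ∀ t, |b t| ≤ M)
    (hb0 : ∀ t ≤ 0, b t = 0) (G : ℂ → ℂ)
    (hG : ∀ s : ℂ, 0 < s.re → ∫ t : ℝ, (b t : ℂ) * Complex.exp (-s * t) = G s)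
    (l u x : ℝ) (hx : 0 < x) :
    ∫ y in (-1:ℝ)..1, ((1 - |y| : ℝ) : ℂ) * Complex.exp (Complex.I * (y * (l * u)))
      * G (x + Complex.I * (l * y)) =
    ∫ t : ℝ, ((b t * Real.exp (-x * t) * K (l * (u - t)) : ℝ) : ℂ) := by
  have hM0 : 0 ≤ M := (abs_nonneg _).trans (hM 0)
  have h1 : ∀ y : ℝ, ((1 - |y| : ℝ) : ℂ) * Complex.exp (Complex.I * (y * (l * u)))
      * G (x + Complex.I * (l * y)) = ∫ t : ℝ, ((b t * Real.exp (-x * t) : ℝ) : ℂ) *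
        (((1 - |y| : ℝ) : ℂ) * Complex.exp (Complex.I * (y * (l * (u - t) : ℝ)))) := by
    intro y
    rw [← hG _ (by simpa using hx), ← integral_const_mul]
    refine integral_congr_ae (Eventually.of_forall fun t => ?_)
    simp only
    push_cast
    have : Complex.exp (Complex.I * (y * (l * u))) * Complex.exp (-(x + Complex.I * (l * y)) * t) =
      Complex.exp (-x * t) * Complex.exp (Complex.I * (y * (l * (u - t)))) := by
      rw [← Complex.exp_add, ← Complex.exp_add]
      congr 1
      ring
    linear_combination (1 - ((|y| : ℝ) : ℂ)) * (b t : ℂ) * this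
  simp_rw [h1]
  rw [intervalIntegral.integral_of_le (by norm_num)]
  rw [integral_integral_swap]
  · refine integral_congr_ae (Eventually.of_forall fun t => ?_)
    simp only
    rw [integral_const_mul, ← intervalIntegral.integral_of_le (by norm_num), K_complex]
    push_cast
    rfl
  · have hi : Integrable (fun t : ℝ => Set.indicator (Set.Ioi 0) (fun t => M * Real.exp (-x * t)) t) := by
      rw [integrable_indicator_iff measurableSet_Ioi]
      exact (integrableOn_exp_mul_Ioi (by linarith) 0).const_mul M
    have h2 : Integrable (fun _ : ℝ => (1:ℝ)) (volume.restrict (Set.Ioc (-1:ℝ) 1)) :=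
      integrableOn_const (by simp)
    refine (h2.mul_prod hi).mono' ?_ ?_
    · refine Measurable.aestronglyMeasurable ?_
      unfold Function.uncurry
      have : Measurable fun a : ℝ × ℝ => b a.2 := hb.comp measurable_snd
      fun_prop
    · have hm : ∀ᵐ p : ℝ × ℝ ∂((volume.restrict (Set.Ioc (-1:ℝ) 1)).prod volume),
          p.1 ∈ Set.Ioc (-1:ℝ) 1 := by
        rw [← Measure.restrict_univ (μ := (volume : Measure ℝ)), Measure.restrict_restrict measurableSet_Ioc,
          Measure.prod_restrict]
        filter_upwards [ae_restrict_mem (by measurability)] with p hp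
        simpa using hp.1
      filter_upwards [hm] with p hp
      simp only [Function.uncurry]
      have e1 : ‖Complex.exp (Complex.I * (p.1 * (l * (u - p.2) : ℝ)))‖ = 1 := by
        rw [mul_comm]
        exact_mod_cast Complex.norm_exp_ofReal_mul_I (p.1 * (l * (u - p.2)))
      rw [norm_mul, norm_mul, e1, Complex.norm_real, Complex.norm_real, one_mul, mul_one]
      have e2 : ‖1 - |p.1|‖ ≤ 1 := by
        have : |p.1| ≤ 1 := abs_le.2 ⟨hp.1.le, hp.2⟩
        rw [Real.norm_of_nonneg (by linarith)]
        linarith [abs_nonneg p.1]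
      by_cases ht : 0 < p.2
      · rw [Set.indicator_of_mem (by exact ht), norm_mul, Real.norm_of_nonneg (Real.exp_pos _).le]
        have := mul_le_mul_of_nonneg_right (hM p.2) (Real.exp_pos (-x * p.2)).le
        exact (mul_le_of_le_one_right (by positivity) e2).trans this
      · rw [Set.indicator_of_notMem (by exact ht), hb0 _ (not_lt.1 ht)]
        simp

lemma limit_identity (b : ℝ → ℝ) (hb : Measurable b) (M : ℝ) (hM : ∀ t, |b t| ≤ M)
    (hb0 : ∀ t ≤ 0, b t = 0) (G : ℂ → ℂ) (hGc : ContinuousOn G {s | 0 ≤ s.re})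
    (hG : ∀ s : ℂ, 0 < s.re → ∫ t : ℝ, (b t : ℂ) * Complex.exp (-s * t) = G s)
    (l u : ℝ) (hl : 0 < l) :
    ∫ y in (-1:ℝ)..1, ((1 - |y| : ℝ) : ℂ) * Complex.exp (Complex.I * (y * (l * u)))
      * G (Complex.I * (l * y)) =
    ∫ t : ℝ, ((b t * K (l * (u - t)) : ℝ) : ℂ) := by
  have hM0 : 0 ≤ M := (abs_nonneg _).trans (hM 0)
  -- bound for `G` on a compact set
  have hcomp : IsCompact ((fun p : ℝ × ℝ => (p.1 : ℂ) + Complex.I * (l * p.2)) ''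
      (Set.Icc 0 1 ×ˢ Set.Icc (-1) 1)) :=
    (isCompact_Icc.prod isCompact_Icc).image (by fun_prop)
  obtain ⟨C, hC⟩ := hcomp.exists_bound_of_continuousOn (f := G) (hGc.mono (by
    rintro _ ⟨p, hp, rfl⟩
    simpa using hp.1.1))
  have hpath : ∀ x : ℝ, 0 ≤ x → Continuous fun y : ℝ => G (x + Complex.I * (l * y)) := by
    intro x hx
    refine hGc.comp_continuous (by fun_prop) fun y => ?_
    simpa using hx
  have hL : Tendsto (fun x : ℝ => ∫ y in (-1:ℝ)..1, ((1 - |y| : ℝ) : ℂ) *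
      Complex.exp (Complex.I * (y * (l * u))) * G (x + Complex.I * (l * y))) (𝓝[>] 0)
      (𝓝 (∫ y in (-1:ℝ)..1, ((1 - |y| : ℝ) : ℂ) *
      Complex.exp (Complex.I * (y * (l * u))) * G (Complex.I * (l * y)))) := by
    refine intervalIntegral.tendsto_integral_filter_of_dominated_convergence (fun _ => C) ?_ ?_ ?_ ?_
    · filter_upwards [self_mem_nhdsWithin] with x hx
      have := hpath x (le_of_lt hx)
      exact (Continuous.mul (by fun_prop) this).aestronglyMeasurable
    · filter_upwards [Ioo_mem_nhdsGT (zero_lt_one (α := ℝ))] with x hx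
      refine Eventually.of_forall fun y hy => ?_
      rw [Set.uIoc_of_le (by norm_num)] at hy
      have e1 : ‖Complex.exp (Complex.I * (y * (l * u)))‖ = 1 := by
        rw [mul_comm]
        exact_mod_cast Complex.norm_exp_ofReal_mul_I (y * (l * u))
      have e2 : ‖1 - |y|‖ ≤ 1 := by
        have : |y| ≤ 1 := abs_le.2 ⟨hy.1.le, hy.2⟩
        rw [Real.norm_of_nonneg (by linarith)]
        linarith [abs_nonneg y]
      rw [norm_mul, norm_mul, e1, Complex.norm_real, mul_one]
      refine (mul_le_of_le_one_left (norm_nonneg _) e2).trans (hC _ ?_)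
      exact ⟨(x, y), ⟨⟨hx.1.le, hx.2.le⟩, ⟨hy.1.le, hy.2⟩⟩, rfl⟩
    · simp
    · refine Eventually.of_forall fun y hy => ?_
      refine Tendsto.const_mul _ ?_
      have h1 : ContinuousWithinAt G {s | 0 ≤ s.re} (Complex.I * (l * y)) :=
        hGc _ (by simp)
      refine h1.tendsto.comp (tendsto_nhdsWithin_iff.2 ⟨?_, ?_⟩)
      · have : Continuous fun x : ℝ => (x : ℂ) + Complex.I * (l * y) := by fun_prop
        have := (this.tendsto 0).mono_left (nhdsWithin_le_nhds (s := Set.Ioi 0))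
        simpa using this
      · filter_upwards [self_mem_nhdsWithin] with x hx
        simpa using le_of_lt hx
  have hKi : Integrable fun t => M * K (l * (u - t)) :=
    ((((integrable_comp_mul_left_iff K hl.ne').2 K_integrable)).comp_sub_left u).const_mul M
  have hR : Tendsto (fun x : ℝ => ∫ t : ℝ, ((b t * Real.exp (-x * t) * K (l * (u - t)) : ℝ) : ℂ))
      (𝓝[>] 0) (𝓝 (∫ t : ℝ, ((b t * K (l * (u - t)) : ℝ) : ℂ))) := by
    refine tendsto_integral_filter_of_dominated_convergence (fun t => M * K (l * (u - t))) ?_ ?_ hKi ?_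
    · refine Eventually.of_forall fun x => Measurable.aestronglyMeasurable ?_
      have : Measurable fun t => K (l * (u - t)) := K_meas.comp (by fun_prop)
      fun_prop
    · filter_upwards [self_mem_nhdsWithin] with x hx
      refine Eventually.of_forall fun t => ?_
      rw [Complex.norm_real, norm_mul, Real.norm_of_nonneg (K_nonneg _)]
      refine mul_le_mul_of_nonneg_right ?_ (K_nonneg _)
      rcases le_or_gt t 0 with ht | ht
      · rw [hb0 t ht]; simpa using hM0
      · rw [norm_mul, Real.norm_of_nonneg (Real.exp_pos _).le]
        refine (mul_le_of_le_one_right (norm_nonneg _) ?_).trans (hM t)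
        rw [Real.exp_le_one_iff]
        have : 0 < x * t := mul_pos hx ht
        linarith
    · refine Eventually.of_forall fun t => ?_
      have : Continuous fun x : ℝ => ((b t * Real.exp (-x * t) * K (l * (u - t)) : ℝ) : ℂ) := by
        fun_prop
      have := (this.tendsto 0).mono_left (nhdsWithin_le_nhds (s := Set.Ioi 0))
      simpa using this
  refine tendsto_nhds_unique hL (hR.congr' ?_)
  filter_upwards [self_mem_nhdsWithin] with x hx
  exact (fubini_identity b hb M hM hb0 G hG l u x hx).symm

lemma J_tendsto (b : ℝ → ℝ) (hb : Measurable b) (M : ℝ) (hM : ∀ t, |b t| ≤ M)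
    (hb0 : ∀ t ≤ 0, b t = 0) (G : ℂ → ℂ) (hGc : ContinuousOn G {s | 0 ≤ s.re})
    (hG : ∀ s : ℂ, 0 < s.re → ∫ t : ℝ, (b t : ℂ) * Complex.exp (-s * t) = G s)
    (l : ℝ) (hl : 0 < l) : Tendsto (fun u => ∫ w, b (u - w / l) * K w) atTop (𝓝 0) := by
  have h1 : ∀ u, ∫ w, b (u - w / l) * K w = l * ∫ t, b t * K (l * (u - t)) := by
    intro u
    have h2 := integral_sub_left_eq_self (fun t => b (u - (l * t) / l) * K (l * t)) volume u
    have h3 := Measure.integral_comp_mul_left (fun w => b (u - w / l) * K w) l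
    rw [h3] at h2
    have h4 : ∀ t, b (u - (l * (u - t)) / l) * K (l * (u - t)) = b t * K (l * (u - t)) := by
      intro t
      rw [mul_div_cancel_left₀ _ hl.ne', sub_sub_cancel]
    simp_rw [h4] at h2
    rw [h2, abs_of_pos (inv_pos.2 hl), smul_eq_mul, mul_inv_cancel_left₀ hl.ne']
  simp_rw [h1]
  rw [← mul_zero l]
  refine Tendsto.const_mul l ?_
  have hRL := Real.tendsto_integral_exp_smul_cocompact (fun y : ℝ => Set.indicator (Set.Ioc (-1:ℝ) 1)
    (fun y : ℝ => ((1 - |y| : ℝ) : ℂ) * G (Complex.I * (l * y))) y)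
  have h5 : Tendsto (fun u : ℝ => -(l * u / (2 * π))) atTop (cocompact ℝ) := by
    refine (tendsto_neg_atTop_atBot.comp ?_).mono_right atBot_le_cocompact
    exact (tendsto_id.const_mul_atTop hl).atTop_div_const (by positivity)
  have h6 := hRL.comp h5
  have h7 : Tendsto (fun u : ℝ => ((∫ t, b t * K (l * (u - t)) : ℝ) : ℂ)) atTop (𝓝 0) := by
    refine h6.congr fun u => ?_
    rw [← integral_complex_ofReal, ← limit_identity b hb M hM hb0 G hGc hG l u hl,
      intervalIntegral.integral_of_le (by norm_num), ← integral_indicator measurableSet_Ioc]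
    simp only [Function.comp]
    refine integral_congr_ae (Eventually.of_forall fun y => ?_)
    simp only [Set.indicator_apply]
    split_ifs
    · rw [Circle.smul_def, Real.fourierChar_apply, smul_eq_mul]
      have : ((2 * π * -(y * -(l * u / (2 * π))) : ℝ) : ℂ) * Complex.I = Complex.I * (y * (l * u)) := by
        have : 2 * π * -(y * -(l * u / (2 * π))) = y * (l * u) := by
          field_simp
        rw [this]; push_cast; ring
      rw [this]; ring
    · simp
  have := (Complex.continuous_re.tendsto 0).comp h7
  simpa [Function.comp_def] using this

theorem tauberian (b : ℝ → ℝ) (hb : Measurable b) (M : ℝ) (hM : ∀ t, |b t| ≤ M)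
    (hb0 : ∀ t ≤ 0, b t = 0) (hmono : ∀ s t, 0 < s → s ≤ t →
      (b s + 1) * Real.exp s ≤ (b t + 1) * Real.exp t)
    (G : ℂ → ℂ) (hGc : ContinuousOn G {s | 0 ≤ s.re})
    (hG : ∀ s : ℂ, 0 < s.re → ∫ t : ℝ, (b t : ℂ) * Complex.exp (-s * t) = G s) :
    Tendsto b atTop (𝓝 0) := by
  have hexp : ∀ ε : ℝ, 0 < ε → ∃ δ : ℝ, 0 < δ ∧ Real.exp (2 * δ) < 1 + ε := by
    intro ε hε
    have : Tendsto (fun δ : ℝ => Real.exp (2 * δ)) (𝓝[>] 0) (𝓝 1) := by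
      have : Continuous fun δ : ℝ => Real.exp (2 * δ) := by fun_prop
      simpa using (this.tendsto 0).mono_left (nhdsWithin_le_nhds (s := Set.Ioi 0))
    obtain ⟨δ, h1, h2⟩ := ((this.eventually_lt_const (show (1:ℝ) < 1 + ε by linarith)).and
      self_mem_nhdsWithin).exists
    exact ⟨δ, h2, h1⟩
  have hstep : ∀ s t, 0 < s → s ≤ t → b s + 1 ≤ (b t + 1) * Real.exp (t - s) := by
    intro s t hs hst
    have := hmono s t hs hst
    rw [Real.exp_sub, mul_div_assoc', le_div_iff₀ (Real.exp_pos s)]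
    exact this
  rw [Metric.tendsto_atTop']
  intro ε hε
  obtain ⟨δ, hδ, hδ2⟩ := hexp (ε / (2 * (M + 1 + ε))) (by
    have := (abs_nonneg _).trans (hM 0)
    positivity)
  have hM0 : 0 ≤ M := (abs_nonneg _).trans (hM 0)
  obtain ⟨l1, hl1, h1⟩ := core b hb M hM (ε / 2) δ (by positivity) hδ
  obtain ⟨l2, hl2, h2⟩ := core (fun t => - b t) hb.neg M (by simpa using hM) (ε / 2) δ
    (by positivity) hδ
  have T1 := J_tendsto b hb M hM hb0 G hGc hG l1 hl1
  have T2 := (J_tendsto b hb M hM hb0 G hGc hG l2 hl2).neg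
  rw [neg_zero] at T2
  have E1 := T1.eventually_lt_const (show (0:ℝ) < ε / 2 / 4 by positivity)
  have E2 := T2.eventually_lt_const (show (0:ℝ) < ε / 2 / 4 by positivity)
  obtain ⟨U, hU⟩ := eventually_atTop.1 (E1.and E2)
  refine ⟨max U 0 + 2 * δ, fun u hu => ?_⟩
  have hu0 : 2 * δ < u := by linarith [le_max_right U 0]
  have huU : U < u - 2 * δ := by linarith [le_max_left U 0]
  have key : (Real.exp (2 * δ) - 1) * (M + 1 + ε) < ε / 2 := by
    have : Real.exp (2 * δ) - 1 < ε / (2 * (M + 1 + ε)) := by linarith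
    rw [lt_div_iff₀ (by positivity)] at this
    linarith
  have hexp1 : 1 ≤ Real.exp (2 * δ) := Real.one_le_exp (by linarith)
  rw [dist_zero_right, Real.norm_eq_abs, abs_lt]
  constructor
  · by_contra! hcon
    have := (hU (u - δ) (by linarith)).2
    have h3 := h2 (u - δ) (fun t ht => ?_)
    · simp only [neg_mul, integral_neg] at h3
      linarith
    · rw [abs_le] at ht
      have h4 := hstep t u (by linarith) (by linarith)
      have h5 : Real.exp (u - t) ≤ Real.exp (2 * δ) := Real.exp_le_exp.2 (by linarith)
      have h6 : 1 ≤ Real.exp (u - t) := Real.one_le_exp (by linarith)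
      have h7 := (abs_le.1 (hM u))
      rcases le_or_gt 0 (b u + 1) with h8 | h8 <;> nlinarith
  · by_contra! hcon
    have := (hU (u + δ) (by linarith)).1
    have h3 := h1 (u + δ) (fun t ht => ?_)
    · linarith
    · rw [abs_le] at ht
      have h4 := hstep u t (by linarith) (by linarith)
      have h5 : Real.exp (t - u) ≤ Real.exp (2 * δ) := Real.exp_le_exp.2 (by linarith)
      have h6 : 1 ≤ Real.exp (t - u) := Real.one_le_exp (by linarith)
      have h7 := (abs_le.1 (hM t))
      rcases le_or_gt 0 (b t + 1) with h8 | h8 <;> nlinarith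

end PNTAux

namespace PNTAux
open MeasureTheory Topology

noncomputable def bf (t : ℝ) : ℝ :=
  if 0 < t then Chebyshev.psi (Real.exp t) * Real.exp (-t) - 1 else 0

noncomputable def Gf (s : ℂ) : ℂ :=
  (ArithmeticFunction.vonMangoldt.LFunctionResidueClassAux (1 : ZMod 1) (s + 1) - 1) / (s + 1)

lemma Gf_cont : ContinuousOn Gf {s | 0 ≤ s.re} := by
  unfold Gf
  refine ContinuousOn.div (ContinuousOn.sub ?_ continuousOn_const) (by fun_prop) ?_
  · refine (ArithmeticFunction.vonMangoldt.continuousOn_LFunctionResidueClassAux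
      (1 : ZMod 1)).comp (by fun_prop) ?_
    intro s hs
    simp only [Set.mem_ofPred_eq] at hs ⊢
    simpa using hs
  · intro s hs h
    have := congrArg Complex.re h
    simp at this hs
    linarith

lemma L_eq (s : ℂ) (hs : 1 < s.re) :
    LSeries (fun n => (ArithmeticFunction.vonMangoldt n : ℂ)) s =
      ArithmeticFunction.vonMangoldt.LFunctionResidueClassAux (1 : ZMod 1) s + 1 / (s - 1) := by
  rw [ArithmeticFunction.vonMangoldt.eqOn_LFunctionResidueClassAux isUnit_one hs]
  have : ArithmeticFunction.vonMangoldt.residueClass (1 : ZMod 1) =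
      fun n => ArithmeticFunction.vonMangoldt n := by
    ext n
    simp [ArithmeticFunction.vonMangoldt.residueClass, Set.indicator_apply,
      eq_iff_true_of_subsingleton]
  simp only [this]
  simp

lemma L_int (s : ℂ) (hs : 1 < s.re) :
    LSeries (fun n => (ArithmeticFunction.vonMangoldt n : ℂ)) s =
      s * ∫ t in Set.Ioi (0 : ℝ), (Chebyshev.psi (Real.exp t) : ℂ) * Complex.exp (-s * t) := by
  rw [LSeries_eq_mul_integral_of_nonneg (fun n => ArithmeticFunction.vonMangoldt n) zero_le_one hs
    _ (fun n => ArithmeticFunction.vonMangoldt_nonneg)]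
  · congr 1
    have him : Real.exp '' Set.Ioi 0 = Set.Ioi 1 := by
      ext x
      constructor
      · rintro ⟨t, ht, rfl⟩
        exact Real.one_lt_exp_iff.2 ht
      · intro hx
        exact ⟨Real.log x, Real.log_pos hx, Real.exp_log (zero_lt_one.trans hx)⟩
    rw [← him, integral_image_eq_integral_abs_deriv_smul measurableSet_Ioi
      (fun x _ => (Real.hasDerivAt_exp x).hasDerivWithinAt) Real.exp_injective.injOn]
    refine setIntegral_congr_fun measurableSet_Ioi fun t _ => ?_
    rw [abs_of_pos (Real.exp_pos t), Complex.real_smul]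
    have e1 : ((∑ k ∈ Finset.Icc 1 ⌊Real.exp t⌋₊, (ArithmeticFunction.vonMangoldt k : ℂ))) =
        (Chebyshev.psi (Real.exp t) : ℂ) := by
      unfold Chebyshev.psi
      push_cast
      rfl
    rw [e1, Complex.cpow_def_of_ne_zero (by exact_mod_cast (Real.exp_pos t).ne'),
      ← Complex.ofReal_log (Real.exp_pos t).le, Real.log_exp, Complex.ofReal_exp,
      mul_left_comm, ← Complex.exp_add]
    congr 2
    ring
  · refine Asymptotics.IsBigO.of_bound (Real.log 4 + 4) (Eventually.of_forall fun n => ?_)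
    have := Chebyshev.psi_le_const_mul_self (x := n) (by positivity)
    have e : Chebyshev.psi n = ∑ k ∈ Finset.Icc 1 n, ArithmeticFunction.vonMangoldt k := by
      unfold Chebyshev.psi
      rw [Nat.floor_natCast]
      rfl
    rw [← e, Real.norm_of_nonneg (Chebyshev.psi_nonneg _), Real.rpow_one, Real.norm_of_nonneg (by positivity)]
    exact this

lemma psi_meas : Measurable fun t => Chebyshev.psi (Real.exp t) :=
  Chebyshev.psi_mono.measurable.comp Real.measurable_exp

lemma bf_meas : Measurable bf := by
  unfold bf
  refine Measurable.ite measurableSet_Ioi ?_ measurable_const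
  have := psi_meas
  fun_prop

lemma psi_bound (t : ℝ) : Chebyshev.psi (Real.exp t) * Real.exp (-t) ≤ Real.log 4 + 4 := by
  have := Chebyshev.psi_le_const_mul_self (Real.exp_pos t).le
  rw [Real.exp_neg, ← div_eq_mul_inv, div_le_iff₀ (Real.exp_pos t)]
  exact this

lemma bf_bound (t : ℝ) : |bf t| ≤ Real.log 4 + 4 := by
  have h4 : 0 ≤ Real.log 4 := Real.log_nonneg (by norm_num)
  unfold bf
  split_ifs
  · have h1 := psi_bound t
    have h2 : 0 ≤ Chebyshev.psi (Real.exp t) * Real.exp (-t) :=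
      mul_nonneg (Chebyshev.psi_nonneg _) (Real.exp_pos _).le
    rw [abs_le]
    constructor <;> linarith
  · simp; linarith

lemma bf_G (s : ℂ) (hs : 0 < s.re) :
    ∫ t : ℝ, (bf t : ℂ) * Complex.exp (-s * t) = Gf s := by
  have hs0 : s ≠ 0 := by rintro rfl; simp at hs
  have hs1 : s + 1 ≠ 0 := by
    intro h
    have := congrArg Complex.re h
    simp at this
    linarith
  have h1 : ∀ t : ℝ, (bf t : ℂ) * Complex.exp (-s * t) = Set.indicator (Set.Ioi 0)
      (fun t : ℝ => (Chebyshev.psi (Real.exp t) : ℂ) * Complex.exp (-(s + 1) * t)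
        - Complex.exp (-s * t)) t := by
    intro t
    unfold bf
    by_cases ht : 0 < t
    · rw [Set.indicator_of_mem (by exact ht), if_pos ht]
      have : Complex.exp (-(s + 1) * t) = Complex.exp (-t) * Complex.exp (-s * t) := by
        rw [← Complex.exp_add]; congr 1; ring
      rw [this]
      push_cast
      ring
    · rw [Set.indicator_of_notMem (by exact ht), if_neg ht]
      simp
  simp_rw [h1]
  rw [integral_indicator measurableSet_Ioi]
  have hi2 := integrableOn_exp_mul_complex_Ioi (a := -s) (by simpa using hs) 0
  have hi1 : IntegrableOn (fun t : ℝ => (Chebyshev.psi (Real.exp t) : ℂ) *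
      Complex.exp (-(s + 1) * t)) (Set.Ioi 0) := by
    refine (hi2.norm.const_mul (Real.log 4 + 4)).mono' ?_ (Eventually.of_forall fun t => ?_)
    · have := psi_meas
      exact Measurable.aestronglyMeasurable (by fun_prop)
    · have : Complex.exp (-(s + 1) * t) = Complex.exp (-t) * Complex.exp (-s * t) := by
        rw [← Complex.exp_add]; congr 1; ring
      rw [this, ← mul_assoc, norm_mul]
      refine mul_le_mul_of_nonneg_right ?_ (norm_nonneg _)
      rw [norm_mul, Complex.norm_real, Real.norm_of_nonneg (Chebyshev.psi_nonneg _),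
        Complex.norm_exp]
      simpa using psi_bound t
  rw [integral_sub hi1 hi2, integral_exp_mul_complex_Ioi (by simpa using hs)]
  have h2 := L_int (s + 1) (by simpa using hs)
  rw [L_eq (s + 1) (by simpa using hs)] at h2
  unfold Gf
  simp only [Complex.ofReal_zero, mul_zero, Complex.exp_zero, add_sub_cancel_right] at h2 ⊢
  rw [eq_div_iff hs1, sub_mul, mul_comm _ (s + 1), ← h2]
  field_simp
  ring

lemma bf_tendsto : Tendsto bf atTop (𝓝 0) := by
  refine tauberian bf bf_meas _ bf_bound ?_ ?_ Gf Gf_cont bf_G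
  · intro t ht
    simp [bf, not_lt.2 ht]
  · intro s t hs hst
    unfold bf
    rw [if_pos hs, if_pos (hs.trans_le hst)]
    simp only [sub_add_cancel, mul_assoc, ← Real.exp_add, neg_add_cancel, Real.exp_zero, mul_one]
    exact Chebyshev.psi_mono (Real.exp_le_exp.2 hst)

/-- Prime number theorem for `ψ`. -/
theorem psi_pnt : Tendsto (fun x => Chebyshev.psi x / x) atTop (𝓝 1) := by
  have h := (bf_tendsto.comp Real.tendsto_log_atTop).add_const 1
  rw [zero_add] at h
  refine h.congr' ?_
  filter_upwards [eventually_gt_atTop 1] with x hx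
  have hx0 : 0 < x := by linarith
  simp only [Function.comp, bf, if_pos (Real.log_pos hx), Real.exp_neg, Real.exp_log hx0]
  rw [div_eq_mul_inv]; ring

theorem theta_pnt : Tendsto (fun x => Chebyshev.theta x / x) atTop (𝓝 1) := by
  have h1 : (Chebyshev.psi - Chebyshev.theta) =o[atTop] (fun x : ℝ => x) := by
    refine Chebyshev.isBigO_psi_sub_theta_sqrt.trans_isLittleO ?_
    rw [Asymptotics.isLittleO_iff_tendsto' ]
    · simp_rw [Real.sqrt_div_self]
      exact (Real.tendsto_sqrt_atTop.inv_tendsto_atTop).congr fun x => by simp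
    · filter_upwards [eventually_gt_atTop 0] with x hx h
      exact absurd h hx.ne'
  have h2 := psi_pnt.sub h1.tendsto_div_nhds_zero
  rw [sub_zero] at h2
  refine h2.congr fun x => ?_
  simp only [Pi.sub_apply]
  ring

end PNTAux

namespace PNTAux
open MeasureTheory Topology

lemma theta_eq (t : ℝ) : theta t = Chebyshev.theta t := by
  rw [Chebyshev.theta_eq_sum_Icc]
  unfold theta
  congr 2
  ext n
  simp [Nat.lt_succ_iff]

lemma prime_nth (k : ℕ) : (Nat.nth Nat.Prime k).Prime := Nat.prime_nth_prime k

lemma nth_lt {i j : ℕ} (h : i < j) : Nat.nth Nat.Prime i < Nat.nth Nat.Prime j :=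
  Nat.nth_strictMono Nat.infinite_setOfPred_prime h

lemma theta_nth (k : ℕ) : theta (nthPrime (k + 1)) = Real.log (primorialN (k + 1)) := by
  unfold theta nthPrime primorialN
  rw [Nat.floor_natCast, Nat.add_sub_cancel]
  push_cast
  rw [Real.log_prod (fun i _ => by exact_mod_cast (prime_nth i).ne_zero)]
  symm
  refine Finset.sum_bij (fun i _ => Nat.nth Nat.Prime i) ?_ ?_ ?_ ?_
  · intro i hi
    rw [Finset.mem_range, Nat.lt_succ_iff] at hi
    rw [Finset.mem_filter, Finset.mem_range, Nat.lt_succ_iff]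
    exact ⟨(Nat.nth_strictMono Nat.infinite_setOfPred_prime).monotone hi, prime_nth i⟩
  · intro i _ j _ h
    exact (Nat.nth_strictMono Nat.infinite_setOfPred_prime).injective h
  · intro p hp
    rw [Finset.mem_filter, Finset.mem_range, Nat.lt_succ_iff] at hp
    refine ⟨Nat.count Nat.Prime p, ?_, Nat.nth_count hp.2⟩
    rw [Finset.mem_range, Nat.lt_succ_iff]
    rw [← (Nat.nth_strictMono Nat.infinite_setOfPred_prime).le_iff_le, Nat.nth_count hp.2]
    exact hp.1
  · intro i _
    rfl

lemma primorialN_succ (k : ℕ) : primorialN (k + 1) = primorialN k * Nat.nth Nat.Prime k :=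
  Finset.prod_range_succ _ _

lemma primorialN_pos (k : ℕ) : 0 < primorialN k :=
  Finset.prod_pos fun i _ => (prime_nth i).pos

lemma two_pow_le (k : ℕ) : 2 ^ k ≤ primorialN k := by
  induction k with
  | zero => simp [primorialN]
  | succ k ih =>
    rw [primorialN_succ, pow_succ]
    exact Nat.mul_le_mul ih (prime_nth k).two_le

lemma bdd (y : ℝ) : BddAbove {n : ℕ | (primorialN n : ℝ) ≤ y} := by
  refine ⟨⌊y⌋₊, fun n hn => Nat.le_floor ?_⟩
  have h1 : n ≤ primorialN n := (Nat.lt_two_pow_self).le.trans (two_pow_le n)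
  have h2 : (n : ℝ) ≤ primorialN n := by exact_mod_cast h1
  exact h2.trans hn

lemma le_index {y : ℝ} {m : ℕ} (h : (primorialN m : ℝ) ≤ y) : m ≤ primorialFloorIndex y :=
  le_csSup (bdd y) h

lemma index_le {y : ℝ} (hy : 2 ≤ y) : (primorialN (primorialFloorIndex y) : ℝ) ≤ y := by
  have : primorialFloorIndex y ∈ {n : ℕ | (primorialN n : ℝ) ≤ y} := by
    refine Nat.sSup_mem ⟨0, ?_⟩ (bdd y)
    show ((primorialN 0 : ℕ) : ℝ) ≤ y
    simp [primorialN]; linarith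
  exact this

lemma lt_index {y : ℝ} : y < (primorialN (primorialFloorIndex y + 1) : ℝ) := by
  by_contra! h
  have := le_index h
  omega

lemma one_le_index {y : ℝ} (hy : 2 ≤ y) : 1 ≤ primorialFloorIndex y := by
  apply le_index
  simpa [primorialN, Nat.nth_prime_zero_eq_two] using hy

lemma second (y : ℝ) (hy : 2 ≤ y) :
      theta (nthPrime (primorialFloorIndex y)) ≤ Real.log y ∧
      Real.log y < theta (nthPrime (primorialFloorIndex y + 1)) := by
  obtain ⟨k, hk⟩ := Nat.exists_eq_add_of_le' (one_le_index hy)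
  have h1 := index_le hy
  have h2 := lt_index (y := y)
  rw [hk] at h1 h2 ⊢
  rw [theta_nth, theta_nth]
  have := primorialN_pos (k + 1)
  exact ⟨Real.log_le_log (by exact_mod_cast this) h1, Real.log_lt_log (by linarith) h2⟩

lemma nth_succ_le (k : ℕ) : Nat.nth Nat.Prime (k + 1) ≤ 2 * Nat.nth Nat.Prime k := by
  obtain ⟨p, hp, h1, h2⟩ := Nat.exists_prime_lt_and_le_two_mul _ (prime_nth k).ne_zero
  refine le_trans ?_ h2
  rw [← Nat.nth_count hp] at h1 ⊢
  have := (Nat.nth_strictMono Nat.infinite_setOfPred_prime).lt_iff_lt.1 h1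
  exact (Nat.nth_strictMono Nat.infinite_setOfPred_prime).monotone this

lemma first (ε : ℝ) (hε : 0 < ε) : ∃ Y : ℝ, ∀ y ≥ Y,
      (1 - ε) * Real.log y ≤ (nthPrime (primorialFloorIndex y) : ℝ) ∧
      (nthPrime (primorialFloorIndex y) : ℝ) ≤ (1 + ε) * Real.log y := by
  -- asymptotics for a real variable `x`
  have h1 : ∀ᶠ x : ℝ in atTop, 1 / (1 + ε) < Chebyshev.theta x / x :=
    theta_pnt.eventually_const_lt (by rw [div_lt_one (by positivity)]; linarith)
  have hlog : Tendsto (fun x : ℝ => Real.log (2 * x) / x) atTop (𝓝 0) := by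
    have h := (Real.isLittleO_log_id_atTop.tendsto_div_nhds_zero).comp
      (tendsto_id.const_mul_atTop (show (0:ℝ) < 2 by norm_num))
    have h' := h.const_mul 2
    rw [mul_zero] at h'
    refine h'.congr fun x => ?_
    simp only [Function.comp, id]
    ring
  have h2 : ∀ᶠ x : ℝ in atTop, Chebyshev.theta x / x + Real.log (2 * x) / x < 1 + ε := by
    have := theta_pnt.add hlog
    exact this.eventually_lt_const (by linarith)
  obtain ⟨X, hX⟩ := eventually_atTop.1 ((h1.and h2).and (eventually_gt_atTop 0))
  obtain ⟨m, hm⟩ := exists_nat_ge X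
  refine ⟨max 2 (primorialN (m + 1)), fun y hy => ?_⟩
  have hy2 : 2 ≤ y := (le_max_left _ _).trans hy
  obtain ⟨s1, s2⟩ := second y hy2
  have hi := le_index ((le_max_right _ _).trans hy)
  obtain ⟨k, hk⟩ := Nat.exists_eq_add_of_le' (one_le_index hy2)
  have hlogy : 0 < Real.log y := Real.log_pos (by linarith)
  rw [hk] at s1 s2 hi ⊢
  have hpX : X ≤ (nthPrime (k + 1) : ℝ) := by
    have : m ≤ nthPrime (k + 1) := by
      unfold nthPrime
      rw [Nat.add_sub_cancel]
      exact (show m ≤ k by omega).trans (Nat.nth_strictMono Nat.infinite_setOfPred_prime).le_apply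
    exact hm.trans (by exact_mod_cast this)
  obtain ⟨⟨a1, a2⟩, a3⟩ := hX _ hpX
  have s3 : Real.log y ≤ theta (nthPrime (k + 1)) + Real.log (2 * nthPrime (k + 1)) := by
    refine s2.le.trans ?_
    rw [theta_nth, theta_nth, primorialN_succ (k + 1)]
    push_cast
    have p1 : (0 : ℝ) < primorialN (k + 1) := by exact_mod_cast primorialN_pos _
    have p2 : (0 : ℝ) < Nat.nth Nat.Prime (k + 1) := by exact_mod_cast (prime_nth _).pos
    rw [Real.log_mul p1.ne' p2.ne']
    have : Real.log (Nat.nth Nat.Prime (k + 1)) ≤ Real.log (2 * nthPrime (k + 1)) := by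
      refine Real.log_le_log p2 ?_
      unfold nthPrime
      exact_mod_cast nth_succ_le k
    linarith
  rw [theta_eq] at s1 s3
  rw [div_lt_div_iff₀ (by positivity) a3] at a1
  rw [← add_div, div_lt_iff₀ a3] at a2
  constructor
  · rcases le_or_gt ε 1 with h | h
    · have q1 : Real.log y ≤ (1 + ε) * nthPrime (k + 1) := s3.trans a2.le
      have q2 := mul_le_mul_of_nonneg_left q1 (sub_nonneg.2 h)
      have q3 : (0 : ℝ) ≤ ε ^ 2 * nthPrime (k + 1) := by positivity
      linarith
    · nlinarith
  · nlinarith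

end PNTAux
/-- The largest prime factor `q(y) = p_{n(y)}` of the largest primorial `𝒫_{n(y)} ≤ y`
satisfies `(1−ε)·log y ≤ q(y) ≤ (1+ε)·log y` for all large `y`; equivalently, with
`n = n(y)`, one has `ϑ(pₙ) ≤ log y < ϑ(pₙ₊₁)`. -/
theorem largest_prime_factor_of_primorialFloor :
    (∀ ε : ℝ, 0 < ε → ∃ Y : ℝ, ∀ y ≥ Y,
      (1 - ε) * Real.log y ≤ (nthPrime (primorialFloorIndex y) : ℝ) ∧
      (nthPrime (primorialFloorIndex y) : ℝ) ≤ (1 + ε) * Real.log y) ∧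
    (∀ y : ℝ, 2 ≤ y →
      theta (nthPrime (primorialFloorIndex y)) ≤ Real.log y ∧
      Real.log y < theta (nthPrime (primorialFloorIndex y + 1))) := by
  exact ⟨PNTAux.first, PNTAux.second⟩
end
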